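/- arXiv:2510.17608 — 2 statements merged into one kernel-verified Lean document; each statement's English description precedes it below -/
import Mathlib

section
/- Let d ≥ 1 and let p₀ be an everywhere positive, twice continuously differentiable probability density on ℝ^d such that log p₀ is (α₀, M₀)-weakly concave and ∇ log p₀ is L₀-Lipschitz, i.e. ‖∇ log p₀(x) − ∇ log p₀(y)‖ ≤ L₀ ‖x − y‖ for all x, y. Then for every t > 0, ∇ log p_t is L(t)-Lipschitz: ‖∇ log p_t(x) − ∇ log p_t(y)‖ ≤ L(t) ‖x − y‖ for all x, y ∈ ℝ^d. -/
open scoped RealInnerProductSpace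
open MeasureTheory

/-- The weak convexity profile of a function `g : ℝ^d → ℝ`. -/
noncomputable def profile {d : ℕ} (g : EuclideanSpace ℝ (Fin d) → ℝ) (r : ℝ) : ℝ :=
  sInf { z : ℝ | ∃ x y : EuclideanSpace ℝ (Fin d),
    ‖x - y‖ = r ∧ z = ⟪gradient g x - gradient g y, x - y⟫ / ‖x - y‖ ^ 2 }

/-- `f_M(r) = 2√M · tanh(√M · r / 2)`. -/
noncomputable def fM (M r : ℝ) : ℝ := 2 * Real.sqrt M * Real.tanh (Real.sqrt M * r / 2)

/-- `g` is `(α, M)`-weakly convex. -/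
def WeaklyConvex {d : ℕ} (g : EuclideanSpace ℝ (Fin d) → ℝ) (α M : ℝ) : Prop :=
  ∀ r : ℝ, 0 < r → α - fM M r / r ≤ profile g r

/-- `g` is `(α, M)`-weakly concave. -/
def WeaklyConcave {d : ℕ} (g : EuclideanSpace ℝ (Fin d) → ℝ) (α M : ℝ) : Prop :=
  WeaklyConvex (fun x => -g x) α M

/-- `c₀(t) = exp(∫₀ᵗ f(s) ds)`. -/
noncomputable def c0 (f : ℝ → ℝ) (t : ℝ) : ℝ := Real.exp (∫ s in (0:ℝ)..t, f s)

/-- `c₁(t) = ∫₀ᵗ exp(−2 ∫ₛᵗ f(v) dv) g(s)² ds`. -/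
noncomputable def c1 (f g : ℝ → ℝ) (t : ℝ) : ℝ :=
  ∫ s in (0:ℝ)..t, Real.exp (-2 * ∫ v in s..t, f v) * g s ^ 2

/-- `∫₀ᵗ exp(2 ∫₀ˢ f(v) dv) g(s)² ds`. -/
noncomputable def Jfg (f g : ℝ → ℝ) (t : ℝ) : ℝ :=
  ∫ s in (0:ℝ)..t, Real.exp (2 * ∫ v in (0:ℝ)..s, f v) * g s ^ 2

/-- `α(t) = 1 / (α₀⁻¹ c₀(t)⁻² + c₁(t))`. -/
noncomputable def alphaT (f g : ℝ → ℝ) (α₀ t : ℝ) : ℝ :=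
  1 / (α₀⁻¹ * ((c0 f t)⁻¹) ^ 2 + c1 f g t)

/-- `M(t) = M₀ c₀(t)² / (1 + α₀ ∫₀ᵗ exp(2 ∫₀ˢ f(v) dv) g(s)² ds)²`. -/
noncomputable def MT (f g : ℝ → ℝ) (α₀ M₀ t : ℝ) : ℝ :=
  M₀ * c0 f t ^ 2 / (1 + α₀ * Jfg f g t) ^ 2

/-- The law `p_t` of the forward process started at density `p₀`. -/
noncomputable def pt {d : ℕ} (f g : ℝ → ℝ) (p₀ : EuclideanSpace ℝ (Fin d) → ℝ)
    (t : ℝ) (x : EuclideanSpace ℝ (Fin d)) : ℝ :=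
  ∫ y : EuclideanSpace ℝ (Fin d),
    (2 * Real.pi * c1 f g t) ^ (-(d : ℝ) / 2) *
      Real.exp (-‖x - (c0 f t)⁻¹ • y‖ ^ 2 / (2 * c1 f g t)) * p₀ y

/-- The Lipschitz constant `L(t)`. -/
noncomputable def Lt (f g : ℝ → ℝ) (α₀ M₀ L₀ t : ℝ) : ℝ :=
  max (min (1 / c1 f g t) (c0 f t ^ 2 * L₀))
    (-(alphaT f g α₀ t - MT f g α₀ M₀ t))

/-!
Up to a positive factor, `p_t` is the heat semigroup at time `s = c₁(t)` applied to the rescaled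
density `v₀ x = p₀ (c₀(t) x)`, so that `u_s = -log v_s` solves the viscous Hamilton–Jacobi equation
`∂ₛu = (Δu - ‖∇u‖²) / 2`, and Lipschitz bounds on `∇u_s` amount to two-sided bounds on the second
differences of `u_s`.

The Cauchy–Schwarz inequality for the heat integral bounds the second differences from above, both
by the Lipschitz constant of `∇u₀` and by `1 / s`. For the bound from below, weak convexity of `u₀`
says that the four-point functional
`u (a + ρθ) + u (a - ρθ) - u (a + σθ) - u (a - σθ) + F ρ - F σ`, for `|σ| ≤ ρ` and `‖θ‖ = 1`, is
nonnegative at time `0` for a barrier `F` of the form `2 log cosh (mρ) - αρ²`. A maximum principle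
propagates the sign when `m` and `α` evolve suitably: perturbing the inner and outer points by
reflected directions makes the second-order terms cancel, which is the deterministic counterpart of
reflection coupling. Taking `σ = 0` and `log cosh y ≤ y² / 2` then gives the lower bound
`α_s - m_s²`.
-/

section SecondDifferences

variable {V : Type*} [NormedAddCommGroup V]

section NormedSpace

variable [NormedSpace ℝ V] {u : V → ℝ} {L : ℝ}

theorem hasDerivAt_comp_line {G : Type*} [NormedAddCommGroup G] [NormedSpace ℝ G]
    {φ : V → G} {φ' : V →L[ℝ] G} {x e : V} {τ : ℝ} (h : HasFDerivAt φ φ' (x + τ • e)) :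
    HasDerivAt (fun τ : ℝ => φ (x + τ • e)) (φ' e) τ := by
  have hline : HasDerivAt (fun τ : ℝ => x + τ • e) e τ := by
    simpa using ((hasDerivAt_id τ).smul_const e).const_add x
  exact h.comp_hasDerivAt τ hline

theorem le_half_mul_of_sub_two_mul_half_le {r : ℝ → ℝ} {K : ℝ} (hr0 : r 0 = 0)
    (hr : HasDerivAt r 0 0) (hstep : ∀ τ, r τ - 2 * r (τ / 2) ≤ K * τ ^ 2 / 4) :
    r 1 ≤ K / 2 := by
  have hmono : Monotone fun n : ℕ => 2 ^ n * r ((1 / 2) ^ n) - K / 2 * (1 / 2) ^ n := by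
    refine monotone_nat_of_le_succ fun n => ?_
    have hs := mul_le_mul_of_nonneg_left (hstep ((1 / 2) ^ n)) (by positivity : (0 : ℝ) ≤ 2 ^ n)
    have hpow : (2 : ℝ) ^ n * (1 / 2) ^ n = 1 := by rw [← mul_pow]; norm_num
    have hrhs : (2 : ℝ) ^ n * (K * ((1 / 2) ^ n) ^ 2 / 4) = K / 4 * (1 / 2) ^ n := by
      linear_combination K / 4 * (1 / 2) ^ n * hpow
    rw [hrhs, show (1 / 2 : ℝ) ^ n / 2 = (1 / 2) ^ (n + 1) by ring] at hs
    rw [pow_succ 2 n, show K / 2 * (1 / 2) ^ (n + 1) = K / 4 * (1 / 2) ^ n by ring]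
    linarith
  have hpow : Filter.Tendsto (fun n : ℕ => (1 / 2 : ℝ) ^ n) Filter.atTop (nhds 0) :=
    tendsto_pow_atTop_nhds_zero_of_lt_one (by norm_num) (by norm_num)
  have hslope : Filter.Tendsto (fun n : ℕ => (2 : ℝ) ^ n * r ((1 / 2) ^ n)) Filter.atTop
      (nhds 0) := by
    have hne : Filter.Tendsto (fun n : ℕ => (1 / 2 : ℝ) ^ n) Filter.atTop
        (nhdsWithin 0 {0}ᶜ) :=
      tendsto_nhdsWithin_iff.2 ⟨hpow, Filter.Eventually.of_forall fun n => by simp⟩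
    refine (hr.tendsto_slope_zero.comp hne).congr fun n => ?_
    simp [hr0]
  have hlim := hslope.sub (hpow.const_mul (K / 2))
  have h0 := hmono.ge_of_tendsto hlim 0
  simp only [pow_zero, one_mul, mul_one, mul_zero, sub_zero] at h0
  linarith

theorem le_tangent_add_of_secondDiff_le
    (hu : ∀ a b, u (a + b) + u (a - b) - 2 * u a ≤ L * ‖b‖ ^ 2)
    {x : V} {u' : V →L[ℝ] ℝ} (hx : HasFDerivAt u u' x) (b : V) :
    u (x + b) ≤ u x + u' b + L / 2 * ‖b‖ ^ 2 := by
  set r : ℝ → ℝ := fun τ => u (x + τ • b) - u x - τ * u' b with hr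
  have hderiv : HasDerivAt r 0 0 := by
    have hline : HasDerivAt (fun τ : ℝ => u (x + τ • b)) (u' b) 0 :=
      hasDerivAt_comp_line (by simpa using hx)
    exact ((hline.sub_const (u x)).sub ((hasDerivAt_id (0 : ℝ)).mul_const (u' b))).congr_deriv
      (by simp)
  have hstep : ∀ τ, r τ - 2 * r (τ / 2) ≤ L * ‖b‖ ^ 2 * τ ^ 2 / 4 := by
    intro τ
    have h := hu (x + (τ / 2) • b) ((τ / 2) • b)
    rw [add_sub_cancel_right, add_assoc, ← add_smul, add_halves, norm_smul, mul_pow,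
      Real.norm_eq_abs, sq_abs] at h
    simp only [hr]
    linarith
  have hfinal := le_half_mul_of_sub_two_mul_half_le (by simp [hr]) hderiv hstep
  simp only [hr, one_smul, one_mul] at hfinal
  linarith

section Growth

variable {u' : V → V →L[ℝ] ℝ} {K : ℝ}

theorem abs_le_of_tangent_le (hL : 0 ≤ L)
    (htan : ∀ x b, u (x + b) ≤ u x + u' x b + L / 2 * ‖b‖ ^ 2)
    (hlow : ∀ x, -K ≤ u x) (hu0 : u 0 ≤ K) (hu'0 : ‖u' 0‖ ≤ K) (x : V) :
    |u x| ≤ (K + L) * (1 + ‖x‖) ^ 2 := by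
  have hK : 0 ≤ K := (norm_nonneg _).trans hu'0
  have hx := norm_nonneg x
  have htan0 := htan 0 x
  rw [zero_add] at htan0
  have hlin : u' 0 x ≤ K * ‖x‖ :=
    (le_abs_self _).trans ((u' 0).le_of_opNorm_le hu'0 x)
  have := hlow x
  exact abs_le.2 ⟨by nlinarith [mul_nonneg hK hx, mul_nonneg hL hx], by
    nlinarith [mul_nonneg hK hx, mul_nonneg hL hx]⟩

/-- A semiconcave function bounded below cannot be steep: moving a distance `1 + ‖x‖` against the
gradient would take it below its lower bound. -/
theorem norm_fderiv_le_of_tangent_le (hL : 0 ≤ L)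
    (htan : ∀ x b, u (x + b) ≤ u x + u' x b + L / 2 * ‖b‖ ^ 2)
    (hlow : ∀ x, -K ≤ u x) (hu0 : u 0 ≤ K) (hu'0 : ‖u' 0‖ ≤ K) (x : V) :
    ‖u' x‖ ≤ (2 * K + 2 * L) * (1 + ‖x‖) := by
  have hK : 0 ≤ K := (norm_nonneg _).trans hu'0
  have hr : 0 < 1 + ‖x‖ := by positivity
  have hdir : ∀ v, u' x v ≤ (2 * K + 2 * L) * (1 + ‖x‖) * ‖v‖ := by
    intro v
    rcases eq_or_ne v 0 with rfl | hv
    · simp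
    have hv : 0 < ‖v‖ := norm_pos_iff.2 hv
    have h := htan x (-((1 + ‖x‖) / ‖v‖) • v)
    rw [norm_smul, Real.norm_eq_abs, abs_neg, abs_of_pos (by positivity), div_mul_cancel₀ _ hv.ne',
      map_smul, smul_eq_mul, neg_mul] at h
    have hux := (abs_le.1 (abs_le_of_tangent_le hL htan hlow hu0 hu'0 x)).2
    have hlow' := hlow (x + -((1 + ‖x‖) / ‖v‖) • v)
    have hK2 : K ≤ K * (1 + ‖x‖) ^ 2 := by
      nlinarith [mul_nonneg hK (norm_nonneg x), mul_nonneg hK (sq_nonneg ‖x‖)]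
    have hbound : (1 + ‖x‖) / ‖v‖ * u' x v ≤ (2 * K + 2 * L) * (1 + ‖x‖) ^ 2 := by
      nlinarith [mul_nonneg hL (sq_nonneg (1 + ‖x‖))]
    rw [div_mul_eq_mul_div, div_le_iff₀ hv] at hbound
    refine le_of_mul_le_mul_left ?_ hr
    linarith
  refine (u' x).opNorm_le_bound (by positivity) fun v => abs_le.2 ⟨?_, hdir v⟩
  have := hdir (-v)
  rw [map_neg, norm_neg] at this
  linarith

end Growth

end NormedSpace

section InnerProductSpace

variable [InnerProductSpace ℝ V] {u : V → ℝ} {p : V → V} {L : ℝ}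

theorem inner_sub_le_of_secondDiff_le (hp : ∀ x, HasFDerivAt u (innerSL ℝ (p x)) x)
    (hupper : ∀ a b, u (a + b) + u (a - b) - 2 * u a ≤ L * ‖b‖ ^ 2)
    (hlower : ∀ a b, -(L * ‖b‖ ^ 2) ≤ u (a + b) + u (a - b) - 2 * u a) (x y η : V) :
    ⟪p x - p y, η⟫ ≤ L / 2 * (‖η‖ ^ 2 + ‖x - y‖ ^ 2) := by
  have tangent_le : ∀ x b, u (x + b) ≤ u x + ⟪p x, b⟫ + L / 2 * ‖b‖ ^ 2 := fun x b =>
    le_tangent_add_of_secondDiff_le hupper (hp x) b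
  have le_tangent : ∀ x b, u x + ⟪p x, b⟫ - L / 2 * ‖b‖ ^ 2 ≤ u (x + b) := by
    intro x b
    have hneg : ∀ a b, -u (a + b) + -u (a - b) - 2 * -u a ≤ L * ‖b‖ ^ 2 := fun a b => by
      linarith [hlower a b]
    have h := le_tangent_add_of_secondDiff_le (u := fun z => -u z) hneg (hp x).fun_neg b
    simp only [neg_apply, innerSL_apply_apply] at h
    linarith
  set w : V := (1 / 2 : ℝ) • (η + (x - y)) with hw
  have hη : η = w + (w - (x - y)) := by
    rw [← add_sub_assoc, ← two_smul ℝ w, hw, smul_smul]; norm_num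
  have h₁ := le_tangent x (w - (x - y))
  have h₂ := tangent_le y w
  have h₃ := le_tangent y (x - y - w)
  have h₄ := tangent_le x (-w)
  rw [show x + (w - (x - y)) = y + w by abel] at h₁
  rw [show y + (x - y - w) = x + -w by abel, norm_sub_rev] at h₃
  rw [norm_neg] at h₄
  have hnorm : ‖η‖ ^ 2 + ‖x - y‖ ^ 2 = 2 * (‖w - (x - y)‖ ^ 2 + ‖w‖ ^ 2) := by
    have h := parallelogram_law_with_norm ℝ w (w - (x - y))
    rw [← hη, sub_sub_cancel] at h
    linarith
  have hinner : ⟪p x - p y, η⟫ = ⟪p x, w - (x - y)⟫ - ⟪p x, -w⟫ + ⟪p y, x - y - w⟫ - ⟪p y, w⟫ := by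
    rw [hη]
    simp only [inner_sub_left, inner_sub_right, inner_add_right, inner_neg_right]
    ring
  rw [hnorm, hinner]
  linarith

theorem norm_sub_le_of_abs_secondDiff_le (hp : ∀ x, HasFDerivAt u (innerSL ℝ (p x)) x)
    (hupper : ∀ a b, u (a + b) + u (a - b) - 2 * u a ≤ L * ‖b‖ ^ 2)
    (hlower : ∀ a b, -(L * ‖b‖ ^ 2) ≤ u (a + b) + u (a - b) - 2 * u a) (x y : V) :
    ‖p x - p y‖ ≤ L * ‖x - y‖ := by
  rcases eq_or_ne x y with rfl | hxy
  · simp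
  rcases eq_or_ne (p x - p y) 0 with hδ | hδ
  · have h := inner_sub_le_of_secondDiff_le hp hupper hlower x y 0
    have hpos : 0 < ‖x - y‖ := norm_pos_iff.2 (sub_ne_zero.2 hxy)
    simp only [inner_zero_right, norm_zero] at h
    rw [hδ, norm_zero]
    by_contra! hneg
    nlinarith
  have hd : 0 < ‖p x - p y‖ := norm_pos_iff.2 hδ
  have hr : 0 < ‖x - y‖ := norm_pos_iff.2 (sub_ne_zero.2 hxy)
  have h := inner_sub_le_of_secondDiff_le hp hupper hlower x y
    ((‖x - y‖ / ‖p x - p y‖) • (p x - p y))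
  rw [real_inner_smul_right, real_inner_self_eq_norm_sq, norm_smul, Real.norm_eq_abs,
    abs_of_pos (by positivity), div_mul_cancel₀ _ hd.ne', sq ‖p x - p y‖, ← mul_assoc,
    div_mul_cancel₀ _ hd.ne'] at h
  refine le_of_mul_le_mul_left ?_ hr
  linarith

end InnerProductSpace

end SecondDifferences

section TwoJet

/-- `φ` is differentiable near `0` with a derivative that is again differentiable at `0`;
`φ₁` and `φ₂` are its first and second derivatives at `0`. -/
def HasTwoJet (φ : ℝ → ℝ) (φ₁ φ₂ : ℝ) : Prop :=
  ∃ φ' : ℝ → ℝ, (∀ᶠ τ in nhds 0, HasDerivAt φ (φ' τ) τ) ∧ φ' 0 = φ₁ ∧ HasDerivAt φ' φ₂ 0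

namespace HasTwoJet

variable {φ ψ : ℝ → ℝ} {φ₁ φ₂ ψ₁ ψ₂ : ℝ}

theorem add (hφ : HasTwoJet φ φ₁ φ₂) (hψ : HasTwoJet ψ ψ₁ ψ₂) :
    HasTwoJet (fun τ => φ τ + ψ τ) (φ₁ + ψ₁) (φ₂ + ψ₂) := by
  obtain ⟨φ', hφ', rfl, hφ''⟩ := hφ
  obtain ⟨ψ', hψ', rfl, hψ''⟩ := hψ
  exact ⟨fun τ => φ' τ + ψ' τ, by filter_upwards [hφ', hψ'] with τ h h' using h.add h', rfl,
    hφ''.add hψ''⟩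

theorem sub (hφ : HasTwoJet φ φ₁ φ₂) (hψ : HasTwoJet ψ ψ₁ ψ₂) :
    HasTwoJet (fun τ => φ τ - ψ τ) (φ₁ - ψ₁) (φ₂ - ψ₂) := by
  obtain ⟨φ', hφ', rfl, hφ''⟩ := hφ
  obtain ⟨ψ', hψ', rfl, hψ''⟩ := hψ
  exact ⟨fun τ => φ' τ - ψ' τ, by filter_upwards [hφ', hψ'] with τ h h' using h.sub h', rfl,
    hφ''.sub hψ''⟩

theorem eq_zero_and_nonneg_of_isLocalMin (h : HasTwoJet φ φ₁ φ₂) (hmin : IsLocalMin φ 0) :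
    φ₁ = 0 ∧ 0 ≤ φ₂ := by
  obtain ⟨φ', hφ', rfl, hφ''⟩ := h
  have hzero : φ' 0 = 0 := hmin.hasDerivAt_eq_zero hφ'.self_of_nhds
  refine ⟨hzero, ?_⟩
  by_contra! hneg
  have hderiv : deriv φ =ᶠ[nhds 0] φ' := hφ'.mono fun τ h => h.deriv
  have hderiv₂ : deriv (deriv φ) 0 = φ₂ := by rw [hderiv.deriv_eq, hφ''.deriv]
  have hmax : IsLocalMax φ 0 := isLocalMax_of_deriv_deriv_neg (by rwa [hderiv₂])
    (by rw [hφ'.self_of_nhds.deriv, hzero]) hφ'.self_of_nhds.continuousAt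
  have hconst : φ =ᶠ[nhds 0] fun _ => φ 0 := by
    filter_upwards [hmin, hmax] with τ h h' using le_antisymm h' h
  have hderiv_zero : deriv φ =ᶠ[nhds 0] fun _ => 0 := by simpa using hconst.deriv
  rw [← hderiv₂, hderiv_zero.deriv_eq, deriv_const] at hneg
  exact hneg.false

theorem comp_line {V : Type*} [NormedAddCommGroup V] [InnerProductSpace ℝ V] {u : V → ℝ}
    {p : V → V} {x e : V} {B : V →L[ℝ] V} (hu : ∀ y, HasFDerivAt u (innerSL ℝ (p y)) y)
    (hp : HasFDerivAt p B x) :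
    HasTwoJet (fun τ => u (x + τ • e)) ⟪p x, e⟫ ⟪B e, e⟫ := by
  refine ⟨fun τ => ⟪p (x + τ • e), e⟫, Filter.Eventually.of_forall fun τ => ?_, by simp, ?_⟩
  · exact hasDerivAt_comp_line (hu (x + τ • e))
  · have hline : HasDerivAt (fun τ : ℝ => p (x + τ • e)) (B e) 0 :=
      hasDerivAt_comp_line (by simpa using hp)
    exact (hline.inner ℝ (hasDerivAt_const 0 e)).congr_deriv (by simp)

theorem comp_add_mul {F F₁ : ℝ → ℝ} {F₂ ρ : ℝ} (hF : ∀ r, HasDerivAt F (F₁ r) r)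
    (hF₁ : HasDerivAt F₁ F₂ ρ) (c : ℝ) :
    HasTwoJet (fun τ => F (ρ + τ * c)) (F₁ ρ * c) (F₂ * c ^ 2) := by
  have hline : ∀ τ : ℝ, HasDerivAt (fun τ : ℝ => ρ + τ * c) c τ := fun τ => by
    simpa using ((hasDerivAt_id τ).mul_const c).const_add ρ
  refine ⟨fun τ => F₁ (ρ + τ * c) * c, Filter.Eventually.of_forall fun τ => ?_, by simp, ?_⟩
  · exact (hF _).comp τ (hline τ)
  · have hF₁' : HasDerivAt F₁ F₂ (ρ + 0 * c) := by simpa using hF₁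
    exact ((hF₁'.comp 0 (hline 0)).mul_const c).congr_deriv (by ring)

theorem const_mul_sq_quadratic (β N B D : ℝ) :
    HasTwoJet (fun τ => β * (N + 2 * τ * B + τ ^ 2 * D) ^ 2) (β * (4 * N * B))
      (β * (8 * B ^ 2 + 4 * N * D)) := by
  have hquad : ∀ τ : ℝ, HasDerivAt (fun τ : ℝ => N + 2 * τ * B + τ ^ 2 * D)
      (2 * B + 2 * τ * D) τ := fun τ =>
    (((((hasDerivAt_id τ).const_mul 2).mul_const B).const_add N).add
      (((hasDerivAt_id τ).pow 2).mul_const D)).congr_deriv (by simp)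
  have hlin : HasDerivAt (fun τ : ℝ => 2 * B + 2 * τ * D) (2 * D) 0 :=
    ((((hasDerivAt_id (0 : ℝ)).const_mul 2).mul_const D).const_add (2 * B)).congr_deriv (by simp)
  refine ⟨fun τ => β * (2 * (N + 2 * τ * B + τ ^ 2 * D) * (2 * B + 2 * τ * D)),
    Filter.Eventually.of_forall fun τ => ?_, by ring, ?_⟩
  · exact (((hquad τ).pow 2).const_mul β).congr_deriv (by simp)
  · exact ((((hquad 0).const_mul 2).mul hlin).const_mul β).congr_deriv (by ring)

end HasTwoJet

theorem deriv_nonpos_of_forall_mem_Icc_le {ψ : ℝ → ℝ} {c a s : ℝ} (hs : a < s)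
    (h : HasDerivAt ψ c s) (hmin : ∀ r ∈ Set.Icc a s, ψ s ≤ ψ r) : c ≤ 0 := by
  have hslope := (hasDerivWithinAt_iff_tendsto_slope' (s := Set.Iio s) (by simp)).1
    (h.hasDerivWithinAt (s := Set.Iio s))
  refine le_of_tendsto hslope ?_
  filter_upwards [Ioo_mem_nhdsLT hs] with r hr
  rw [slope_def_field]
  exact div_nonpos_of_nonneg_of_nonpos (by linarith [hmin r ⟨hr.1.le, hr.2.le⟩])
    (by linarith [hr.2])

end TwoJet

section FourPoint

variable {E : Type*} [NormedAddCommGroup E] [InnerProductSpace ℝ E]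

theorem norm_sq_le_of_smul_orthogonal_eq {w w' θ : E} {ρ σ : ℝ} (hθ : ‖θ‖ = 1) (hρ : 0 < ρ)
    (hσ : |σ| ≤ ρ) (hrot : ∀ e, ⟪θ, e⟫ = 0 → ρ * ⟪w, e⟫ = σ * ⟪w', e⟫) :
    ‖w‖ ^ 2 ≤ ‖w'‖ ^ 2 + ⟪w, θ⟫ ^ 2 - ⟪w', θ⟫ ^ 2 := by
  have hθθ : ⟪θ, θ⟫ = 1 := by rw [real_inner_self_eq_norm_sq, hθ, one_pow]
  have hsplit : ∀ w : E, ‖w - ⟪w, θ⟫ • θ‖ ^ 2 = ‖w‖ ^ 2 - ⟪w, θ⟫ ^ 2 := by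
    intro w
    rw [norm_sub_sq_real, real_inner_smul_right, norm_smul, hθ, mul_one, Real.norm_eq_abs, sq_abs]
    ring
  have horth : ∀ w : E, ⟪θ, w - ⟪w, θ⟫ • θ⟫ = 0 := by
    intro w
    rw [inner_sub_right, real_inner_smul_right, hθθ, mul_one, real_inner_comm, sub_self]
  set z := w - ⟪w, θ⟫ • θ with hz
  set z' := w' - ⟪w', θ⟫ • θ with hz'
  have hinner : ρ * ‖z‖ ^ 2 = σ * ⟪z', z⟫ := by
    have h := hrot z (horth w)
    rwa [show w = z + ⟪w, θ⟫ • θ by simp [hz], show w' = z' + ⟪w', θ⟫ • θ by simp [hz'],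
      inner_add_left, inner_add_left, real_inner_smul_left, real_inner_smul_left, horth w, mul_zero,
      mul_zero, add_zero, add_zero, real_inner_self_eq_norm_sq] at h
  have hle : ρ * ‖z‖ ^ 2 ≤ ρ * (‖z'‖ * ‖z‖) := by
    rw [hinner]
    calc σ * ⟪z', z⟫ ≤ |σ * ⟪z', z⟫| := le_abs_self _
      _ = |σ| * |⟪z', z⟫| := abs_mul _ _
      _ ≤ ρ * (‖z'‖ * ‖z‖) :=
        mul_le_mul hσ (abs_real_inner_le_norm _ _) (abs_nonneg _) hρ.le
  have hsq : ‖z‖ ^ 2 ≤ ‖z'‖ ^ 2 := by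
    have := le_of_mul_le_mul_left hle hρ
    nlinarith [sq_nonneg (‖z‖ - ‖z'‖)]
  rw [hsplit w, hsplit w'] at hsq
  linarith

theorem sum_norm_sq_sub_le_of_critical {p q p' q' a θ : E} {ρ σ k f f' C m : ℝ} (hθ : ‖θ‖ = 1)
    (hρ : 0 < ρ) (hσ : |σ| ≤ ρ) (hk : 0 ≤ k) (hcenter : p + q - p' - q' = -(k • a))
    (hrad : ⟪p - q, θ⟫ = -(f + k * ρ)) (hrad' : ⟪p' - q', θ⟫ = -f')
    (hrot : ∀ e, ⟪θ, e⟫ = 0 → ρ * ⟪p - q, e⟫ = σ * ⟪p' - q', e⟫)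
    (ha : ‖a‖ ≤ m) (hρm : ρ ≤ m) (hp : ‖p‖ ≤ C * m) (hq : ‖q‖ ≤ C * m) (hp' : ‖p'‖ ≤ C * m)
    (hq' : ‖q'‖ ≤ C * m) (hf : |f| ≤ C * m) :
    ‖p‖ ^ 2 + ‖q‖ ^ 2 - ‖p'‖ ^ 2 - ‖q'‖ ^ 2 ≤ (f ^ 2 - f' ^ 2) / 2 + 7 / 2 * C * k * m ^ 2 := by
  have hCm : 0 ≤ C * m := (norm_nonneg p).trans hp
  have hsum : ‖p + q‖ ^ 2 - ‖p' + q'‖ ^ 2 ≤ 4 * C * k * m ^ 2 := by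
    have hfactor : ‖p + q‖ ^ 2 - ‖p' + q'‖ ^ 2 = -(k * ⟪a, p + q + (p' + q')⟫) := by
      rw [← real_inner_smul_left, ← inner_neg_left, ← hcenter, sub_sub]
      generalize p + q = S, p' + q' = S'
      rw [inner_sub_left, inner_add_right, inner_add_right, real_inner_self_eq_norm_sq,
        real_inner_self_eq_norm_sq, real_inner_comm S S']
      ring
    have hnorm : ‖p + q + (p' + q')‖ ≤ 4 * (C * m) := by
      linarith [norm_add_le (p + q) (p' + q'), norm_add_le p q, norm_add_le p' q']
    have hinner : -⟪a, p + q + (p' + q')⟫ ≤ m * (4 * (C * m)) :=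
      (neg_le_abs _).trans <| (abs_real_inner_le_norm _ _).trans <|
        mul_le_mul ha hnorm (norm_nonneg _) ((norm_nonneg a).trans ha)
    rw [hfactor]
    linarith [mul_le_mul_of_nonneg_left hinner hk]
  have hdiff : ‖p - q‖ ^ 2 - ‖p' - q'‖ ^ 2 ≤ f ^ 2 - f' ^ 2 + 3 * C * k * m ^ 2 := by
    have h := norm_sq_le_of_smul_orthogonal_eq hθ hρ hσ hrot
    have hslope : f - ⟪p - q, θ⟫ ≤ 3 * (C * m) := by
      have := (neg_le_abs _).trans (abs_real_inner_le_norm (p - q) θ)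
      rw [hθ, mul_one] at this
      linarith [norm_sub_le p q, le_abs_self f]
    have hprod : k * ρ * (f - ⟪p - q, θ⟫) ≤ k * m * (3 * (C * m)) := by
      calc k * ρ * (f - ⟪p - q, θ⟫) ≤ k * ρ * (3 * (C * m)) := by gcongr
        _ ≤ k * m * (3 * (C * m)) := by gcongr
    rw [hrad] at hprod h
    rw [hrad'] at h
    linarith
  have hpar := parallelogram_law_with_norm ℝ p q
  have hpar' := parallelogram_law_with_norm ℝ p' q'
  linarith

theorem le_trace_of_le_inner [FiniteDimensional ℝ E] {B : E →L[ℝ] E} {a θ : E} {c g l : ℝ}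
    (hθ : ‖θ‖ = 1) (hg : 0 ≤ g) (hl : 0 ≤ l) (hc : c ≤ ⟪B θ, θ⟫)
    (horth : ∀ e, ‖e‖ = 1 → ⟪θ, e⟫ = 0 → -(g * ⟪a, e⟫ ^ 2 + l) ≤ ⟪B e, e⟫) :
    c - g * ‖a‖ ^ 2 - l * Module.finrank ℝ E ≤ LinearMap.trace ℝ E B := by
  classical
  have hsingle : Orthonormal ℝ (Subtype.val : ({θ} : Set E) → E) :=
    ⟨fun i => by rw [i.2, hθ], fun i j hij => absurd (Subsingleton.elim i j) hij⟩
  obtain ⟨ι, b, hι, hb⟩ := hsingle.exists_orthonormalBasis_extension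
  set i₀ : ι := ⟨θ, hι rfl⟩
  have hbi₀ : b i₀ = θ := by rw [hb]
  have hterm : ∀ i, (if i = i₀ then c else 0) - g * ⟪a, b i⟫ ^ 2 - l ≤ ⟪b i, B (b i)⟫ := by
    intro i
    rw [real_inner_comm (B (b i))]
    by_cases hi : i = i₀
    · rw [if_pos hi, hi, hbi₀]
      linarith [mul_nonneg hg (sq_nonneg ⟪a, θ⟫)]
    · rw [if_neg hi]
      linarith [horth (b i) (b.norm_eq_one i) (hbi₀ ▸ b.orthonormal.2 (Ne.symm hi))]
  have hparseval : ∑ i, ⟪a, b i⟫ ^ 2 = ‖a‖ ^ 2 := by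
    rw [← b.sum_sq_norm_inner_left a]
    exact Finset.sum_congr rfl fun i _ => by rw [Real.norm_eq_abs, sq_abs]
  have hsum := Finset.sum_le_sum fun i (_ : i ∈ Finset.univ) => hterm i
  rw [Finset.sum_sub_distrib, Finset.sum_sub_distrib, ← Finset.mul_sum, hparseval,
    Finset.sum_ite_eq', if_pos (Finset.mem_univ _), Finset.sum_const, Finset.card_univ,
    ← Module.finrank_eq_card_basis b.toBasis, nsmul_eq_mul] at hsum
  rw [LinearMap.trace_eq_sum_inner _ b]
  exact (le_of_eq (by ring)).trans hsum

end FourPoint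

section MaximumPrinciple

variable {E : Type*} [NormedAddCommGroup E] [InnerProductSpace ℝ E]

/-- `u` solves the viscous Hamilton–Jacobi equation `∂ₛu = (Δu - ‖∇u‖²) / 2` on `(0, T] × E`, is
continuous up to `s = 0`, and grows at most quadratically with an at most linearly growing gradient.
The fields `p = ∇u` and `A = ∇²u` are carried explicitly. -/
structure IsViscousHJSolution (T C : ℝ) (u : ℝ → E → ℝ) (p : ℝ → E → E)
    (A : ℝ → E → E →L[ℝ] E) : Prop where
  continuousOn : ContinuousOn (fun z : ℝ × E => u z.1 z.2) (Set.Icc 0 T ×ˢ Set.univ)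
  hasFDerivAt : ∀ s ∈ Set.Ioc 0 T, ∀ x, HasFDerivAt (u s) (innerSL ℝ (p s x)) x
  hasFDerivAt_gradient : ∀ s ∈ Set.Ioc 0 T, ∀ x, HasFDerivAt (p s) (A s x) x
  hasDerivAt_time : ∀ s ∈ Set.Ioc 0 T, ∀ x,
    HasDerivAt (fun r => u r x) ((LinearMap.trace ℝ E (A s x) - ‖p s x‖ ^ 2) / 2) s
  abs_le : ∀ s ∈ Set.Icc 0 T, ∀ x, |u s x| ≤ C * (1 + ‖x‖) ^ 2
  norm_gradient_le : ∀ s ∈ Set.Ioc 0 T, ∀ x, ‖p s x‖ ≤ C * (1 + ‖x‖)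

/-- `F` is an even function of `ρ` for which the one-dimensional operator
`∂ₛF - (∂ᵨF)² / 4 - ∂ᵨ²F / 2`, obtained by applying the Hamilton–Jacobi equation to the four-point
functional, does not depend on `ρ`. The derivatives `F₁ = ∂ᵨF`, `F₂ = ∂ᵨ²F` and `Fs = ∂ₛF` are
carried explicitly. -/
structure IsFourPointBarrier (T C : ℝ) (F F₁ F₂ Fs : ℝ → ℝ → ℝ) : Prop where
  continuousOn : ContinuousOn (fun z : ℝ × ℝ => F z.1 z.2) (Set.Icc 0 T ×ˢ Set.univ)
  hasDerivAt : ∀ s ∈ Set.Ioc 0 T, ∀ ρ, HasDerivAt (F s) (F₁ s ρ) ρ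
  hasDerivAt₁ : ∀ s ∈ Set.Ioc 0 T, ∀ ρ, HasDerivAt (F₁ s) (F₂ s ρ) ρ
  hasDerivAt_time : ∀ s ∈ Set.Ioc 0 T, ∀ ρ, HasDerivAt (fun r => F r ρ) (Fs s ρ) s
  operator_eq : ∀ s ∈ Set.Ioc 0 T, ∀ ρ σ,
    Fs s ρ - F₁ s ρ ^ 2 / 4 - F₂ s ρ / 2 = Fs s σ - F₁ s σ ^ 2 / 4 - F₂ s σ / 2
  even : ∀ s ∈ Set.Icc 0 T, ∀ ρ, F s (-ρ) = F s ρ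
  abs_le : ∀ s ∈ Set.Icc 0 T, ∀ ρ, |F s ρ| ≤ C * (1 + |ρ|) ^ 2
  abs_deriv_le : ∀ s ∈ Set.Ioc 0 T, ∀ ρ, |F₁ s ρ| ≤ C * (1 + |ρ|)

/-- The four-point functional comparing the spread of `u` over the segments `a ± ρθ` and `a ± σθ`,
which share their centre and direction. -/
def fourPoint (u : E → ℝ) (F : ℝ → ℝ) (a θ : E) (ρ σ : ℝ) : ℝ :=
  u (a + ρ • θ) + u (a - ρ • θ) - u (a + σ • θ) - u (a - σ • θ) + F ρ - F σ

/-- The four-point functional at time `s` with a penalty `ε e^{λs} (1 + ‖a‖² + ρ²)²` that confines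
its minimisers to a compact set. -/
noncomputable def penalizedFourPoint (u : ℝ → E → ℝ) (F : ℝ → ℝ → ℝ) (ε lam s : ℝ) (a θ : E)
    (ρ σ : ℝ) : ℝ :=
  fourPoint (u s) (F s) a θ ρ σ + ε * Real.exp (lam * s) * (1 + ‖a‖ ^ 2 + ρ ^ 2) ^ 2

/-- `(s, a, θ, ρ, σ)` minimises the penalised four-point functional over all times in `[0, T]`, unit
directions `θ` and radii `|σ| ≤ ρ`, and it lies in the interior: `0 < s` and `|σ| < ρ`. -/
structure IsInteriorFourPointMin (T : ℝ) (u : ℝ → E → ℝ) (F : ℝ → ℝ → ℝ) (ε lam s : ℝ) (a θ : E)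
    (ρ σ : ℝ) : Prop where
  time_mem : s ∈ Set.Ioc 0 T
  norm_eq_one : ‖θ‖ = 1
  abs_lt : |σ| < ρ
  le : ∀ r ∈ Set.Icc 0 T, ∀ (b ω : E) (ρ' σ' : ℝ), ‖ω‖ = 1 → |σ'| ≤ ρ' →
    penalizedFourPoint u F ε lam s a θ ρ σ ≤ penalizedFourPoint u F ε lam r b ω ρ' σ'

variable {T C : ℝ} {u : ℝ → E → ℝ} {p : ℝ → E → E} {A : ℝ → E → E →L[ℝ] E}
  {F F₁ F₂ Fs : ℝ → ℝ → ℝ} {ε lam s : ℝ} {a θ : E} {ρ σ : ℝ}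

theorem IsViscousHJSolution.mono {D : ℝ} (hu : IsViscousHJSolution T C u p A) (hCD : C ≤ D) :
    IsViscousHJSolution T D u p A :=
  { hu with
    abs_le := fun s hs x => (hu.abs_le s hs x).trans (by gcongr)
    norm_gradient_le := fun s hs x => (hu.norm_gradient_le s hs x).trans (by gcongr) }

theorem IsFourPointBarrier.mono {D : ℝ} (hF : IsFourPointBarrier T C F F₁ F₂ Fs) (hCD : C ≤ D) :
    IsFourPointBarrier T D F F₁ F₂ Fs :=
  { hF with
    abs_le := fun s hs ρ => (hF.abs_le s hs ρ).trans (by gcongr)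
    abs_deriv_le := fun s hs ρ => (hF.abs_deriv_le s hs ρ).trans (by gcongr) }

namespace IsInteriorFourPointMin

/-- The first- and second-order conditions along the line `(a + τe, θ, ρ + τc, σ + τc')`. -/
theorem critical_line (h : IsInteriorFourPointMin T u F ε lam s a θ ρ σ)
    (hu : IsViscousHJSolution T C u p A) (hF : IsFourPointBarrier T C F F₁ F₂ Fs) (e : E)
    (c c' : ℝ) :
    ⟪p s (a + ρ • θ), e + c • θ⟫ + ⟪p s (a - ρ • θ), e - c • θ⟫
      - ⟪p s (a + σ • θ), e + c' • θ⟫ - ⟪p s (a - σ • θ), e - c' • θ⟫ + F₁ s ρ * c - F₁ s σ * c'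
      + ε * Real.exp (lam * s) * (4 * (1 + ‖a‖ ^ 2 + ρ ^ 2) * (⟪a, e⟫ + ρ * c)) = 0 ∧
    0 ≤ ⟪A s (a + ρ • θ) (e + c • θ), e + c • θ⟫ + ⟪A s (a - ρ • θ) (e - c • θ), e - c • θ⟫
      - ⟪A s (a + σ • θ) (e + c' • θ), e + c' • θ⟫ - ⟪A s (a - σ • θ) (e - c' • θ), e - c' • θ⟫
      + F₂ s ρ * c ^ 2 - F₂ s σ * c' ^ 2 + ε * Real.exp (lam * s) *
        (8 * (⟪a, e⟫ + ρ * c) ^ 2 + 4 * (1 + ‖a‖ ^ 2 + ρ ^ 2) * (‖e‖ ^ 2 + c ^ 2)) := by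
  have hs := h.time_mem
  have jet : ∀ x v, HasTwoJet (fun τ => u s (x + τ • v)) ⟪p s x, v⟫ ⟪A s x v, v⟫ := fun x v =>
    .comp_line (hu.hasFDerivAt s hs) (hu.hasFDerivAt_gradient s hs x)
  have jetF : ∀ r c, HasTwoJet (fun τ => F s (r + τ * c)) (F₁ s r * c) (F₂ s r * c ^ 2) := fun r =>
    .comp_add_mul (hF.hasDerivAt s hs) (hF.hasDerivAt₁ s hs r)
  refine (((((((jet (a + ρ • θ) (e + c • θ)).add (jet (a - ρ • θ) (e - c • θ))).sub
    (jet (a + σ • θ) (e + c' • θ))).sub (jet (a - σ • θ) (e - c' • θ))).add (jetF ρ c)).sub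
    (jetF σ c')).add (.const_mul_sq_quadratic (ε * Real.exp (lam * s)) (1 + ‖a‖ ^ 2 + ρ ^ 2)
    (⟪a, e⟫ + ρ * c) (‖e‖ ^ 2 + c ^ 2))).eq_zero_and_nonneg_of_isLocalMin ?_
  have hadm : ∀ᶠ τ : ℝ in nhds 0, |σ + τ * c'| < ρ + τ * c :=
    ContinuousAt.eventually_lt (by fun_prop) (by fun_prop) (by simpa using h.abs_lt)
  filter_upwards [hadm] with τ hτ
  have hle := h.le s ⟨hs.1.le, hs.2⟩ (a + τ • e) θ _ _ h.norm_eq_one hτ.le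
  have hplus : ∀ r k : ℝ, a + τ • e + (r + τ * k) • θ = a + r • θ + τ • (e + k • θ) :=
    fun r k => by module
  have hminus : ∀ r k : ℝ, a + τ • e - (r + τ * k) • θ = a - r • θ + τ • (e - k • θ) :=
    fun r k => by module
  have hpenalty : 1 + ‖a + τ • e‖ ^ 2 + (ρ + τ * c) ^ 2 =
      1 + ‖a‖ ^ 2 + ρ ^ 2 + 2 * τ * (⟪a, e⟫ + ρ * c) + τ ^ 2 * (‖e‖ ^ 2 + c ^ 2) := by
    rw [norm_add_sq_real, real_inner_smul_right, norm_smul, mul_pow, Real.norm_eq_abs, sq_abs]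
    ring
  simpa only [penalizedFourPoint, fourPoint, hplus, hminus, hpenalty, zero_smul, zero_mul,
    mul_zero, add_zero, zero_pow two_ne_zero] using hle

theorem inner_gradient_rotation (h : IsInteriorFourPointMin T u F ε lam s a θ ρ σ)
    (hu : IsViscousHJSolution T C u p A) {e : E} (he : ‖e‖ = 1) (hθe : ⟪θ, e⟫ = 0) :
    ρ * ⟪p s (a + ρ • θ) - p s (a - ρ • θ), e⟫ = σ * ⟪p s (a + σ • θ) - p s (a - σ • θ), e⟫ := by
  have hs := h.time_mem
  set ω : ℝ → E := fun τ => Real.cos τ • θ + Real.sin τ • e with hω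
  have hω0 : ω 0 = θ := by simp [hω]
  have hωnorm : ∀ τ, ‖ω τ‖ = 1 := by
    intro τ
    rw [← sq_eq_sq₀ (norm_nonneg _) zero_le_one, norm_add_sq_real, real_inner_smul_left,
      real_inner_smul_right, hθe, norm_smul, norm_smul, h.norm_eq_one, he]
    simp
  have hcurve : ∀ r : ℝ, HasDerivAt (fun τ => u s (a + r • ω τ)) (r * ⟪p s (a + r • θ), e⟫) 0 := by
    intro r
    have hω' : HasDerivAt (fun τ => a + r • ω τ) (r • e) 0 :=
      (((((Real.hasDerivAt_cos 0).smul_const θ).add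
        ((Real.hasDerivAt_sin 0).smul_const e)).const_smul r).const_add a).congr_deriv (by simp)
    have hx : HasFDerivAt (u s) (innerSL ℝ (p s (a + r • θ))) (a + r • ω 0) := by
      simpa only [hω0] using hu.hasFDerivAt s hs (a + r • θ)
    exact (hx.comp_hasDerivAt 0 hω').congr_deriv (by simp)
  have hmin : IsLocalMin (fun τ => u s (a + ρ • ω τ) + u s (a + -ρ • ω τ)
      - u s (a + σ • ω τ) - u s (a + -σ • ω τ)) 0 := by
    refine Filter.Eventually.of_forall fun τ => ?_
    have hle := h.le s ⟨hs.1.le, hs.2⟩ a (ω τ) ρ σ (hωnorm τ) h.abs_lt.le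
    simp only [penalizedFourPoint, fourPoint] at hle
    simp only [hω0, neg_smul, ← sub_eq_add_neg]
    linarith
  have hzero := hmin.hasDerivAt_eq_zero
    ((((hcurve ρ).add (hcurve (-ρ))).sub (hcurve σ)).sub (hcurve (-σ)))
  simp only [neg_smul, ← sub_eq_add_neg] at hzero
  rw [inner_sub_left, inner_sub_left]
  linarith

theorem hasDerivAt_time_nonpos (h : IsInteriorFourPointMin T u F ε lam s a θ ρ σ)
    (hu : IsViscousHJSolution T C u p A) (hF : IsFourPointBarrier T C F F₁ F₂ Fs) :
    (LinearMap.trace ℝ E (A s (a + ρ • θ)) - ‖p s (a + ρ • θ)‖ ^ 2) / 2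
      + (LinearMap.trace ℝ E (A s (a - ρ • θ)) - ‖p s (a - ρ • θ)‖ ^ 2) / 2
      - (LinearMap.trace ℝ E (A s (a + σ • θ)) - ‖p s (a + σ • θ)‖ ^ 2) / 2
      - (LinearMap.trace ℝ E (A s (a - σ • θ)) - ‖p s (a - σ • θ)‖ ^ 2) / 2
      + Fs s ρ - Fs s σ
      + lam * (ε * Real.exp (lam * s)) * (1 + ‖a‖ ^ 2 + ρ ^ 2) ^ 2 ≤ 0 := by
  have hs := h.time_mem
  have hpenalty : HasDerivAt (fun r => ε * Real.exp (lam * r) * (1 + ‖a‖ ^ 2 + ρ ^ 2) ^ 2)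
      (lam * (ε * Real.exp (lam * s)) * (1 + ‖a‖ ^ 2 + ρ ^ 2) ^ 2) s :=
    (((((hasDerivAt_id s).const_mul lam).exp).const_mul ε).mul_const _).congr_deriv
      (by simp only [id]; ring)
  refine deriv_nonpos_of_forall_mem_Icc_le hs.1 (((((((hu.hasDerivAt_time s hs _).add
    (hu.hasDerivAt_time s hs _)).sub (hu.hasDerivAt_time s hs _)).sub
    (hu.hasDerivAt_time s hs _)).add (hF.hasDerivAt_time s hs ρ)).sub
    (hF.hasDerivAt_time s hs σ)).add hpenalty) fun r hr => ?_
  exact h.le r ⟨hr.1, hr.2.trans hs.2⟩ a θ ρ σ h.norm_eq_one h.abs_lt.le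

theorem gradient_center (h : IsInteriorFourPointMin T u F ε lam s a θ ρ σ)
    (hu : IsViscousHJSolution T C u p A) (hF : IsFourPointBarrier T C F F₁ F₂ Fs) :
    p s (a + ρ • θ) + p s (a - ρ • θ) - p s (a + σ • θ) - p s (a - σ • θ) =
      -((4 * (ε * Real.exp (lam * s)) * (1 + ‖a‖ ^ 2 + ρ ^ 2)) • a) := by
  refine ext_inner_right ℝ fun e => ?_
  have hcrit := (h.critical_line hu hF e 0 0).1
  simp only [zero_smul, add_zero, sub_zero, mul_zero] at hcrit
  rw [inner_sub_left, inner_sub_left, inner_add_left, inner_neg_left, real_inner_smul_left]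
  linarith

theorem inner_gradient_outer (h : IsInteriorFourPointMin T u F ε lam s a θ ρ σ)
    (hu : IsViscousHJSolution T C u p A) (hF : IsFourPointBarrier T C F F₁ F₂ Fs) :
    ⟪p s (a + ρ • θ) - p s (a - ρ • θ), θ⟫ =
      -(F₁ s ρ + 4 * (ε * Real.exp (lam * s)) * (1 + ‖a‖ ^ 2 + ρ ^ 2) * ρ) := by
  have hcrit := (h.critical_line hu hF 0 1 0).1
  simp only [zero_smul, one_smul, zero_add, zero_sub, add_zero, sub_zero, mul_zero, mul_one,
    inner_zero_right, inner_neg_right] at hcrit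
  rw [inner_sub_left]
  linarith

theorem inner_gradient_inner (h : IsInteriorFourPointMin T u F ε lam s a θ ρ σ)
    (hu : IsViscousHJSolution T C u p A) (hF : IsFourPointBarrier T C F F₁ F₂ Fs) :
    ⟪p s (a + σ • θ) - p s (a - σ • θ), θ⟫ = -F₁ s σ := by
  have hcrit := (h.critical_line hu hF 0 0 1).1
  simp only [zero_smul, one_smul, zero_add, zero_sub, add_zero, sub_zero, mul_zero, mul_one,
    inner_zero_right, inner_neg_right] at hcrit
  rw [inner_sub_left]
  linarith

theorem norm_gradient_le (h : IsInteriorFourPointMin T u F ε lam s a θ ρ σ) (hC : 0 ≤ C)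
    (hu : IsViscousHJSolution T C u p A) {r : ℝ} (hr : |r| ≤ ρ) :
    ‖p s (a + r • θ)‖ ≤ C * (1 + ‖a‖ + ρ) ∧ ‖p s (a - r • θ)‖ ≤ C * (1 + ‖a‖ + ρ) := by
  have hnorm : ‖r • θ‖ ≤ ρ := by rwa [norm_smul, h.norm_eq_one, mul_one]
  constructor <;> refine (hu.norm_gradient_le s h.time_mem _).trans ?_ <;>
    refine mul_le_mul_of_nonneg_left ?_ hC
  · linarith [norm_add_le a (r • θ)]
  · linarith [norm_sub_le a (r • θ)]

theorem smul_inner_gradient_eq (h : IsInteriorFourPointMin T u F ε lam s a θ ρ σ)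
    (hu : IsViscousHJSolution T C u p A) {e : E} (hθe : ⟪θ, e⟫ = 0) :
    ρ * ⟪p s (a + ρ • θ) - p s (a - ρ • θ), e⟫ = σ * ⟪p s (a + σ • θ) - p s (a - σ • θ), e⟫ := by
  rcases eq_or_ne e 0 with rfl | he
  · simp
  have hunit := h.inner_gradient_rotation hu (e := ‖e‖⁻¹ • e) (norm_smul_inv_norm he)
    (by rw [real_inner_smul_right, hθe, mul_zero])
  rw [real_inner_smul_right, real_inner_smul_right, mul_left_comm, mul_left_comm σ] at hunit
  exact mul_left_cancel₀ (inv_ne_zero (norm_ne_zero_iff.2 he)) hunit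

theorem sum_norm_gradient_sq_sub_le (h : IsInteriorFourPointMin T u F ε lam s a θ ρ σ)
    (hε : 0 ≤ ε) (hC : 0 ≤ C) (hu : IsViscousHJSolution T C u p A)
    (hF : IsFourPointBarrier T C F F₁ F₂ Fs) :
    ‖p s (a + ρ • θ)‖ ^ 2 + ‖p s (a - ρ • θ)‖ ^ 2 - ‖p s (a + σ • θ)‖ ^ 2
      - ‖p s (a - σ • θ)‖ ^ 2 ≤
    (F₁ s ρ ^ 2 - F₁ s σ ^ 2) / 2
      + 42 * C * (ε * Real.exp (lam * s)) * (1 + ‖a‖ ^ 2 + ρ ^ 2) ^ 2 := by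
  have hρ : 0 < ρ := (abs_nonneg σ).trans_lt h.abs_lt
  have ha := norm_nonneg a
  have hF₁ : |F₁ s ρ| ≤ C * (1 + ‖a‖ + ρ) :=
    (hF.abs_deriv_le s h.time_mem ρ).trans
      (mul_le_mul_of_nonneg_left (by rw [abs_of_pos hρ]; linarith) hC)
  have houter := h.norm_gradient_le hC hu (abs_of_pos hρ).le
  have hinner := h.norm_gradient_le hC hu h.abs_lt.le
  refine (sum_norm_sq_sub_le_of_critical (k := 4 * (ε * Real.exp (lam * s)) *
    (1 + ‖a‖ ^ 2 + ρ ^ 2)) (m := 1 + ‖a‖ + ρ) h.norm_eq_one hρ h.abs_lt.le (by positivity)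
    (h.gradient_center hu hF) (h.inner_gradient_outer hu hF) (h.inner_gradient_inner hu hF)
    (fun e he => h.smul_inner_gradient_eq hu he) (by linarith) (by linarith) houter.1 houter.2
    hinner.1 hinner.2 hF₁).trans ?_
  have hm : (1 + ‖a‖ + ρ) ^ 2 ≤ 3 * (1 + ‖a‖ ^ 2 + ρ ^ 2) := by
    nlinarith [sq_nonneg (1 - ‖a‖), sq_nonneg (1 - ρ), sq_nonneg (‖a‖ - ρ)]
  have hmul := mul_le_mul_of_nonneg_left hm (by positivity :
    0 ≤ 7 / 2 * C * (4 * (ε * Real.exp (lam * s)) * (1 + ‖a‖ ^ 2 + ρ ^ 2)))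
  linarith

variable [FiniteDimensional ℝ E]

theorem le_trace_hessian (h : IsInteriorFourPointMin T u F ε lam s a θ ρ σ) (hε : 0 ≤ ε)
    (hu : IsViscousHJSolution T C u p A) (hF : IsFourPointBarrier T C F F₁ F₂ Fs) :
    F₂ s σ - F₂ s ρ - (12 + 4 * Module.finrank ℝ E) * (ε * Real.exp (lam * s)) *
      (1 + ‖a‖ ^ 2 + ρ ^ 2) ≤
    LinearMap.trace ℝ E (A s (a + ρ • θ)) + LinearMap.trace ℝ E (A s (a - ρ • θ))
      - LinearMap.trace ℝ E (A s (a + σ • θ)) - LinearMap.trace ℝ E (A s (a - σ • θ)) := by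
  have hβ : 0 ≤ ε * Real.exp (lam * s) := by positivity
  have hradial := (h.critical_line hu hF 0 1 1).2
  simp only [one_smul, zero_add, zero_sub, map_neg, inner_neg_neg, inner_zero_right, norm_zero,
    one_pow, mul_one, zero_pow two_ne_zero] at hradial
  have htrace := le_trace_of_le_inner (B := A s (a + ρ • θ) + A s (a - ρ • θ) - A s (a + σ • θ)
      - A s (a - σ • θ)) (a := a) (g := 8 * (ε * Real.exp (lam * s)))
      (l := 4 * (ε * Real.exp (lam * s)) * (1 + ‖a‖ ^ 2 + ρ ^ 2))
      (c := F₂ s σ - F₂ s ρ - ε * Real.exp (lam * s) * (8 * ρ ^ 2 + 4 * (1 + ‖a‖ ^ 2 + ρ ^ 2)))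
      h.norm_eq_one (by positivity) (by positivity)
      (by simp only [sub_apply, add_apply, inner_sub_left, inner_add_left]; linarith)
      fun e he _ => by
        have htransverse := (h.critical_line hu hF e 0 0).2
        simp only [zero_smul, add_zero, sub_zero, mul_zero, he, zero_pow two_ne_zero, one_pow,
          mul_one] at htransverse
        simp only [sub_apply, add_apply, inner_sub_left, inner_add_left]
        linarith
  simp only [ContinuousLinearMap.toLinearMap_sub, ContinuousLinearMap.toLinearMap_add, map_add,
    map_sub] at htrace
  linarith

theorem penalty_rate_le (h : IsInteriorFourPointMin T u F ε lam s a θ ρ σ) (hε : 0 < ε)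
    (hC : 0 ≤ C) (hu : IsViscousHJSolution T C u p A) (hF : IsFourPointBarrier T C F F₁ F₂ Fs) :
    lam ≤ 21 * C + 2 * Module.finrank ℝ E + 6 := by
  have hβ : 0 < ε * Real.exp (lam * s) := by positivity
  have hN : 1 ≤ 1 + ‖a‖ ^ 2 + ρ ^ 2 := by linarith [sq_nonneg ‖a‖, sq_nonneg ρ]
  have htime := h.hasDerivAt_time_nonpos hu hF
  have htrace := h.le_trace_hessian hε.le hu hF
  have hnorm := h.sum_norm_gradient_sq_sub_le hε.le hC hu hF
  have hbarrier := hF.operator_eq s h.time_mem ρ σ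
  generalize ε * Real.exp (lam * s) = β at *
  generalize 1 + ‖a‖ ^ 2 + ρ ^ 2 = N at *
  have hle : lam * (β * N ^ 2) ≤ 21 * C * (β * N ^ 2) + (2 * Module.finrank ℝ E + 6) * (β * N) := by
    linarith
  have hNsq : (2 * Module.finrank ℝ E + 6) * (β * N) ≤
      (2 * Module.finrank ℝ E + 6) * (β * N ^ 2) := by
    gcongr
    exact le_self_pow₀ hN two_ne_zero
  refine le_of_mul_le_mul_right ?_ (by positivity : 0 < β * N ^ 2)
  linarith

end IsInteriorFourPointMin

theorem fourPoint_eq_zero_of_abs_eq {v : E → ℝ} {G : ℝ → ℝ} (hG : ∀ r, G (-r) = G r)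
    (h : |σ| = ρ) : fourPoint v G a θ ρ σ = 0 := by
  subst h
  rcases abs_choice σ with hσ | hσ <;> rw [hσ, fourPoint]
  · ring
  · rw [hG, neg_smul, sub_neg_eq_add, ← sub_eq_add_neg]
    ring

theorem neg_le_fourPoint (hu : IsViscousHJSolution T C u p A)
    (hF : IsFourPointBarrier T C F F₁ F₂ Fs) (hC : 0 ≤ C) (hs : s ∈ Set.Icc 0 T) (hθ : ‖θ‖ = 1)
    (hσ : |σ| ≤ ρ) : -(18 * C * (1 + ‖a‖ ^ 2 + ρ ^ 2)) ≤ fourPoint (u s) (F s) a θ ρ σ := by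
  have hρ : |ρ| = ρ := abs_of_nonneg ((abs_nonneg σ).trans hσ)
  have hu' : ∀ x, ‖x - a‖ ≤ ρ → |u s x| ≤ C * (1 + ‖a‖ + ρ) ^ 2 := fun x hx => by
    refine (hu.abs_le s hs x).trans ?_
    have := norm_le_norm_add_norm_sub' x a
    exact mul_le_mul_of_nonneg_left (pow_le_pow_left₀ (by positivity) (by linarith) 2) hC
  have hF' : ∀ r, |r| ≤ ρ → |F s r| ≤ C * (1 + ‖a‖ + ρ) ^ 2 := fun r hr => by
    refine (hF.abs_le s hs r).trans ?_
    have := norm_nonneg a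
    gcongr
    linarith
  have hplus := hu' (a + ρ • θ) (by simp [norm_smul, hθ, hρ])
  have hminus := hu' (a - ρ • θ) (by simp [norm_smul, hθ, hρ])
  have hplus' := hu' (a + σ • θ) (by simpa [norm_smul, hθ] using hσ)
  have hminus' := hu' (a - σ • θ) (by simpa [norm_smul, hθ] using hσ)
  have hm : C * (1 + ‖a‖ + ρ) ^ 2 ≤ C * (3 * (1 + ‖a‖ ^ 2 + ρ ^ 2)) := by
    refine mul_le_mul_of_nonneg_left ?_ hC
    nlinarith [sq_nonneg (1 - ‖a‖), sq_nonneg (1 - ρ), sq_nonneg (‖a‖ - ρ)]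
  rw [fourPoint]
  linarith [(abs_le.1 hplus).1, (abs_le.1 hminus).1, (abs_le.1 hplus').2, (abs_le.1 hminus').2,
    (abs_le.1 (hF' ρ hρ.le)).1, (abs_le.1 (hF' σ hσ)).2]

theorem lt_of_penalizedFourPoint_neg (hu : IsViscousHJSolution T C u p A)
    (hF : IsFourPointBarrier T C F F₁ F₂ Fs) (hC : 0 ≤ C) (hε : 0 < ε) (hlam : 0 ≤ lam)
    (hs : s ∈ Set.Icc 0 T) (hθ : ‖θ‖ = 1) (hσ : |σ| ≤ ρ)
    (hneg : penalizedFourPoint u F ε lam s a θ ρ σ < 0) :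
    1 + ‖a‖ ^ 2 + ρ ^ 2 < 18 * C / ε := by
  have hlow := neg_le_fourPoint hu hF hC hs hθ hσ (a := a)
  have hN : 0 < 1 + ‖a‖ ^ 2 + ρ ^ 2 := by positivity
  have hexp : ε * (1 + ‖a‖ ^ 2 + ρ ^ 2) ^ 2 ≤
      ε * Real.exp (lam * s) * (1 + ‖a‖ ^ 2 + ρ ^ 2) ^ 2 := by
    gcongr
    exact le_mul_of_one_le_right hε.le (Real.one_le_exp (mul_nonneg hlam hs.1))
  rw [penalizedFourPoint] at hneg
  rw [lt_div_iff₀ hε]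
  refine lt_of_mul_lt_mul_right ?_ hN.le
  linarith

/-- The points `(s, a, θ, ρ, σ)` with `0 ≤ s ≤ T`, `‖a‖ ≤ R`, `‖θ‖ = 1` and `|σ| ≤ ρ ≤ R`. -/
def fourPointDomain (E : Type*) [NormedAddCommGroup E] (T R : ℝ) : Set (ℝ × E × E × ℝ × ℝ) :=
  (Set.Icc 0 T ×ˢ Metric.closedBall 0 R ×ˢ Metric.sphere 0 1 ×ˢ Set.Icc 0 R ×ˢ Set.Icc (-R) R) ∩
    {z | |z.2.2.2.2| ≤ z.2.2.2.1}

theorem mem_fourPointDomain_iff {V : Type*} [NormedAddCommGroup V] {a θ : V} {R : ℝ} :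
    (s, a, θ, ρ, σ) ∈ fourPointDomain V T R ↔
    s ∈ Set.Icc 0 T ∧ ‖a‖ ≤ R ∧ ‖θ‖ = 1 ∧ |σ| ≤ ρ ∧ ρ ≤ R := by
  simp only [fourPointDomain, Set.mem_inter_iff, Set.mem_prod, Set.mem_ofPred_eq,
    mem_closedBall_zero_iff, mem_sphere_zero_iff_norm, Set.mem_Icc (b := R)]
  refine ⟨fun ⟨⟨hs, ha, hθ, hρ, _⟩, hσ⟩ => ⟨hs, ha, hθ, hσ, hρ.2⟩, fun ⟨hs, ha, hθ, hσ, hρ⟩ => ?_⟩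
  exact ⟨⟨hs, ha, hθ, ⟨(abs_nonneg σ).trans hσ, hρ⟩, abs_le.1 (hσ.trans hρ)⟩, hσ⟩

theorem isCompact_fourPointDomain [FiniteDimensional ℝ E] (T R : ℝ) :
    IsCompact (fourPointDomain E T R) := by
  refine IsCompact.inter_right ?_ (isClosed_le (by fun_prop) (by fun_prop))
  exact isCompact_Icc.prod ((isCompact_closedBall _ _).prod ((isCompact_sphere _ _).prod
    (isCompact_Icc.prod isCompact_Icc)))

theorem continuousOn_penalizedFourPoint (hu : IsViscousHJSolution T C u p A)
    (hF : IsFourPointBarrier T C F F₁ F₂ Fs) (ε lam R : ℝ) :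
    ContinuousOn (fun z : ℝ × E × E × ℝ × ℝ =>
      penalizedFourPoint u F ε lam z.1 z.2.1 z.2.2.1 z.2.2.2.1 z.2.2.2.2)
      (fourPointDomain E T R) := by
  have continuousOn_u : ∀ g : ℝ × E × E × ℝ × ℝ → E, Continuous g →
      ContinuousOn (fun z => u z.1 (g z)) (fourPointDomain E T R) := fun g hg =>
    hu.continuousOn.comp (continuous_fst.prodMk hg).continuousOn fun z hz => ⟨hz.1.1, trivial⟩
  have continuousOn_F : ∀ g : ℝ × E × E × ℝ × ℝ → ℝ, Continuous g →
      ContinuousOn (fun z => F z.1 (g z)) (fourPointDomain E T R) := fun g hg =>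
    hF.continuousOn.comp (continuous_fst.prodMk hg).continuousOn fun z hz => ⟨hz.1.1, trivial⟩
  simp only [penalizedFourPoint, fourPoint]
  refine .add (.sub (.add (.sub (.sub (.add (continuousOn_u _ ?_) (continuousOn_u _ ?_))
    (continuousOn_u _ ?_)) (continuousOn_u _ ?_)) (continuousOn_F _ ?_)) (continuousOn_F _ ?_)) ?_
    <;> fun_prop

theorem exists_isInteriorFourPointMin [FiniteDimensional ℝ E] (hu : IsViscousHJSolution T C u p A)
    (hF : IsFourPointBarrier T C F F₁ F₂ Fs) (hC : 0 ≤ C) (hε : 0 < ε) (hlam : 0 ≤ lam)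
    (hinit : ∀ (b ω : E) (ρ' σ' : ℝ), ‖ω‖ = 1 → |σ'| ≤ ρ' → 0 ≤ fourPoint (u 0) (F 0) b ω ρ' σ')
    (hs : s ∈ Set.Icc 0 T) (hθ : ‖θ‖ = 1) (hσ : |σ| ≤ ρ)
    (hneg : penalizedFourPoint u F ε lam s a θ ρ σ < 0) :
    ∃ (r : ℝ) (b ω : E) (ρ' σ' : ℝ), IsInteriorFourPointMin T u F ε lam r b ω ρ' σ' := by
  set R := 18 * C / ε
  have mem_of_neg : ∀ r ∈ Set.Icc 0 T, ∀ (b ω : E) (ρ' σ' : ℝ), ‖ω‖ = 1 → |σ'| ≤ ρ' →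
      penalizedFourPoint u F ε lam r b ω ρ' σ' < 0 →
      (r, b, ω, ρ', σ') ∈ fourPointDomain E T R := by
    intro r hr b ω ρ' σ' hω hσ' hlt
    have hR := lt_of_penalizedFourPoint_neg hu hF hC hε hlam hr hω hσ' hlt
    exact mem_fourPointDomain_iff.2 ⟨hr, by nlinarith [sq_nonneg ρ', sq_nonneg (‖b‖ - 1)], hω, hσ',
      by nlinarith [sq_nonneg ‖b‖, sq_nonneg (ρ' - 1)]⟩
  have hmem := mem_of_neg s hs a θ ρ σ hθ hσ hneg
  obtain ⟨⟨r, b, ω, ρ', σ'⟩, hmem', hmin⟩ := (isCompact_fourPointDomain T R).exists_isMinOn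
    ⟨_, hmem⟩ (continuousOn_penalizedFourPoint hu hF ε lam R)
  have hneg' : penalizedFourPoint u F ε lam r b ω ρ' σ' < 0 := (hmin hmem).trans_lt hneg
  obtain ⟨hr, -, hω, hσ', -⟩ := mem_fourPointDomain_iff.1 hmem'
  have hfour : fourPoint (u r) (F r) b ω ρ' σ' < 0 := by
    refine lt_of_le_of_lt ?_ hneg'
    exact le_add_of_nonneg_right (by positivity)
  refine ⟨r, b, ω, ρ', σ', ⟨hr.1.lt_of_ne ?_, hr.2⟩, hω, hσ'.lt_of_ne ?_, ?_⟩
  · rintro rfl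
    exact hfour.not_ge (hinit b ω ρ' σ' hω hσ')
  · intro h
    exact hfour.ne (fourPoint_eq_zero_of_abs_eq (hF.even r hr) h)
  · intro r' hr' b' ω' ρ'' σ'' hω' hσ''
    by_cases hlt : penalizedFourPoint u F ε lam r' b' ω' ρ'' σ'' < 0
    · exact hmin (mem_of_neg r' hr' b' ω' ρ'' σ'' hω' hσ'' hlt)
    · exact hneg'.le.trans (not_lt.1 hlt)

theorem fourPoint_nonneg [FiniteDimensional ℝ E] (hu : IsViscousHJSolution T C u p A)
    (hF : IsFourPointBarrier T C F F₁ F₂ Fs) (hC : 0 ≤ C)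
    (hinit : ∀ (b ω : E) (ρ' σ' : ℝ), ‖ω‖ = 1 → |σ'| ≤ ρ' → 0 ≤ fourPoint (u 0) (F 0) b ω ρ' σ')
    (hs : s ∈ Set.Icc 0 T) (a : E) (hθ : ‖θ‖ = 1) (hσ : |σ| ≤ ρ) :
    0 ≤ fourPoint (u s) (F s) a θ ρ σ := by
  set lam : ℝ := 21 * C + 2 * Module.finrank ℝ E + 7
  have hpenalized : ∀ ε : ℝ, 0 < ε → 0 ≤ penalizedFourPoint u F ε lam s a θ ρ σ := by
    intro ε hε
    by_contra! hneg
    obtain ⟨r, b, ω, ρ', σ', hmin⟩ :=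
      exists_isInteriorFourPointMin hu hF hC hε (by positivity) hinit hs hθ hσ hneg
    linarith [hmin.penalty_rate_le hε hC hu hF]
  have hlim : Filter.Tendsto (fun ε => penalizedFourPoint u F ε lam s a θ ρ σ)
      (nhdsWithin 0 (Set.Ioi 0)) (nhds (fourPoint (u s) (F s) a θ ρ σ)) := by
    refine ((Continuous.tendsto' ?_ 0 _ (by simp [penalizedFourPoint])).mono_left
      nhdsWithin_le_nhds)
    unfold penalizedFourPoint
    fun_prop
  exact ge_of_tendsto hlim (eventually_mem_nhdsWithin.mono hpenalized)

end MaximumPrinciple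

section HeatExtension

variable {E : Type*} [NormedAddCommGroup E]

/-- The unnormalised density `exp (-‖z‖² / 2)` of the standard Gaussian. -/
noncomputable def gaussianWeight (z : E) : ℝ := Real.exp (-‖z‖ ^ 2 / 2)

theorem gaussianWeight_pos (z : E) : 0 < gaussianWeight z := Real.exp_pos _

theorem norm_gaussianWeight (z : E) : ‖gaussianWeight z‖ = gaussianWeight z :=
  Real.norm_of_nonneg (gaussianWeight_pos z).le

@[fun_prop]
theorem continuous_gaussianWeight : Continuous (gaussianWeight : E → ℝ) := by
  unfold gaussianWeight
  fun_prop

theorem le_mul_one_add_norm_sq {c C : ℝ} (hc : c ≤ C) (hC : 0 ≤ C) (z : E) :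
    c ≤ C * (1 + ‖z‖) ^ 2 :=
  hc.trans (le_mul_of_one_le_right hC (one_le_pow₀ (by linarith [norm_nonneg z])))

theorem norm_gaussianWeight_smul_le {G : Type*} [NormedAddCommGroup G] [NormedSpace ℝ G] {k : E → G}
    {C : ℝ} (hC : ∀ z, ‖k z‖ ≤ C) (y z : E) :
    ‖gaussianWeight z • k y‖ ≤ C * gaussianWeight z := by
  rw [norm_smul, norm_gaussianWeight, mul_comm]
  exact mul_le_mul_of_nonneg_right (hC y) (gaussianWeight_pos z).le

variable [InnerProductSpace ℝ E]

theorem gaussianWeight_sub_mul_gaussianWeight_add (z e : E) :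
    gaussianWeight z ^ 2 =
      Real.exp (‖e‖ ^ 2) * (gaussianWeight (z - e) * gaussianWeight (z + e)) := by
  simp only [gaussianWeight, ← Real.exp_add, ← Real.exp_nat_mul]
  congr 1
  push_cast
  linarith [parallelogram_law_with_norm ℝ z e]

theorem hasFDerivAt_gaussianWeight (z : E) :
    HasFDerivAt gaussianWeight (-(gaussianWeight z) • innerSL ℝ z) z := by
  have hsq : HasFDerivAt (fun z : E => ‖z‖ ^ 2) (2 • innerSL ℝ z) z :=
    (hasStrictFDerivAt_norm_sq z).hasFDerivAt
  refine (hsq.fun_neg.mul_const (1 / 2 : ℝ)).exp.congr_fderiv ?_ |>.congr_of_eventuallyEq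
    (Filter.Eventually.of_forall fun y => ?_)
  · ext y
    simp [gaussianWeight, div_eq_mul_inv]
  · simp only [gaussianWeight, div_eq_mul_inv, one_mul]

/-- `h` is of class `C²` with gradient `g` and Hessian `B`, all three bounded by `C`. -/
structure HasBoundedHessian (C : ℝ) (h : E → ℝ) (g : E → E) (B : E → E →L[ℝ] E) : Prop where
  hasFDerivAt : ∀ x, HasFDerivAt h (innerSL ℝ (g x)) x
  hasFDerivAt_gradient : ∀ x, HasFDerivAt g (B x) x
  continuous_hessian : Continuous B
  norm_le : ∀ x, ‖h x‖ ≤ C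
  norm_gradient_le : ∀ x, ‖g x‖ ≤ C
  norm_hessian_le : ∀ x, ‖B x‖ ≤ C

namespace HasBoundedHessian

variable {C : ℝ} {h : E → ℝ} {g : E → E} {B : E → E →L[ℝ] E}

theorem continuous (hh : HasBoundedHessian C h g B) : Continuous h :=
  continuous_iff_continuousAt.2 fun x => (hh.hasFDerivAt x).continuousAt

theorem continuous_gradient (hh : HasBoundedHessian C h g B) : Continuous g :=
  continuous_iff_continuousAt.2 fun x => (hh.hasFDerivAt_gradient x).continuousAt

end HasBoundedHessian

variable [FiniteDimensional ℝ E] [MeasurableSpace E] [BorelSpace E]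

theorem integrable_exp_neg_mul_norm_sq {b : ℝ} (hb : 0 < b) :
    Integrable fun z : E => Real.exp (-b * ‖z‖ ^ 2) := by
  refine (GaussianFourier.integrable_cexp_neg_mul_sq_norm_add (V := E) (b := b) (by simpa)
    0 0).norm.congr (Filter.Eventually.of_forall fun z => ?_)
  simp [Complex.norm_exp, ← Complex.ofReal_pow]

theorem integrable_gaussianWeight_mul_sq :
    Integrable fun z : E => gaussianWeight z * (1 + ‖z‖) ^ 2 := by
  refine ((integrable_exp_neg_mul_norm_sq (E := E) (b := 1 / 4) (by norm_num)).const_mul 8).mono'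
    (by fun_prop) (Filter.Eventually.of_forall fun z => ?_)
  have hsq : (1 + ‖z‖) ^ 2 ≤ 8 * Real.exp (1 / 4 * ‖z‖ ^ 2) := by
    nlinarith [sq_nonneg (1 - ‖z‖), Real.add_one_le_exp (1 / 4 * ‖z‖ ^ 2)]
  have hexp : gaussianWeight z * Real.exp (1 / 4 * ‖z‖ ^ 2) = Real.exp (-(1 / 4) * ‖z‖ ^ 2) := by
    rw [gaussianWeight, ← Real.exp_add]
    ring_nf
  rw [norm_mul, norm_gaussianWeight, Real.norm_of_nonneg (by positivity), ← hexp]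
  linarith [mul_le_mul_of_nonneg_left hsq (gaussianWeight_pos z).le]

variable {G : Type*} [NormedAddCommGroup G] [NormedSpace ℝ G] {k : E → G} {C : ℝ}

theorem integrable_gaussianWeight_smul (hk : Continuous k) (hC : ∀ z, ‖k z‖ ≤ C * (1 + ‖z‖) ^ 2) :
    Integrable fun z => gaussianWeight z • k z := by
  refine (integrable_gaussianWeight_mul_sq.const_mul C).mono'
    (by fun_prop) (Filter.Eventually.of_forall fun z => ?_)
  rw [norm_smul, norm_gaussianWeight, mul_left_comm]
  exact mul_le_mul_of_nonneg_left (hC z) (gaussianWeight_pos z).le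

/-- The unnormalised heat semigroup at time `s`: `(2π) ^ (dim E / 2)` times the mean of `k` under
the Gaussian law with mean `x` and covariance `s`. -/
noncomputable def heatExtension (k : E → G) (s : ℝ) (x : E) : G :=
  ∫ z, gaussianWeight z • k (x + √s • z)

theorem integrable_heatExtension (hk : Continuous k) (hC : ∀ z, ‖k z‖ ≤ C) (s : ℝ) (x : E) :
    Integrable fun z => gaussianWeight z • k (x + √s • z) :=
  integrable_gaussianWeight_smul (by fun_prop) fun z =>
    le_mul_one_add_norm_sq (hC _) ((norm_nonneg _).trans (hC 0)) z

theorem integrable_gaussianWeight : Integrable (gaussianWeight : E → ℝ) := by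
  simpa using integrable_heatExtension (k := fun _ : E => (1 : ℝ)) continuous_const
    (fun _ => norm_one.le) 0 0

theorem continuous_heatExtension (hk : Continuous k) (hC : ∀ z, ‖k z‖ ≤ C) :
    Continuous fun q : ℝ × E => heatExtension k q.1 q.2 :=
  continuous_of_dominated (fun q => (integrable_heatExtension hk hC q.1 q.2).aestronglyMeasurable)
    (fun _ => Filter.Eventually.of_forall fun _ => norm_gaussianWeight_smul_le hC _ _)
    (integrable_gaussianWeight.const_mul C) (Filter.Eventually.of_forall fun _ => by fun_prop)

theorem heatExtension_pos {k : E → ℝ} (hk : Continuous k) (hC : ∀ z, ‖k z‖ ≤ C)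
    (hpos : ∀ z, 0 < k z) (s : ℝ) (x : E) : 0 < heatExtension k s x :=
  integral_pos_of_integrable_nonneg_nonzero (by fun_prop) (integrable_heatExtension hk hC s x)
    (fun z => (mul_pos (gaussianWeight_pos z) (hpos _)).le) (x := 0)
    (mul_pos (gaussianWeight_pos 0) (hpos _)).ne'

theorem map_heatExtension [CompleteSpace G] {H : Type*} [NormedAddCommGroup H] [NormedSpace ℝ H]
    [CompleteSpace H] (L : G →L[ℝ] H) (hk : Continuous k) (hC : ∀ z, ‖k z‖ ≤ C) (s : ℝ) (x : E) :
    L (heatExtension k s x) = heatExtension (fun z => L (k z)) s x := by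
  simp only [heatExtension, ← L.integral_comp_comm (integrable_heatExtension hk hC s x), map_smul]

theorem hasFDerivAt_heatExtension {k' : E → E →L[ℝ] G} (hk : ∀ x, HasFDerivAt k (k' x) x)
    (hk' : Continuous k') (hC : ∀ z, ‖k z‖ ≤ C) (hC' : ∀ z, ‖k' z‖ ≤ C) (s : ℝ) (x : E) :
    HasFDerivAt (heatExtension k s) (heatExtension k' s x) x := by
  have hcont : Continuous k := continuous_iff_continuousAt.2 fun x => (hk x).continuousAt
  refine hasFDerivAt_integral_of_dominated_of_fderiv_le (bound := fun z => C * gaussianWeight z)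
    (F' := fun x z => gaussianWeight z • k' (x + √s • z)) Filter.univ_mem
    (Filter.Eventually.of_forall fun y =>
      (integrable_heatExtension hcont hC s y).aestronglyMeasurable)
    (integrable_heatExtension hcont hC s x)
    (integrable_heatExtension hk' hC' s x).aestronglyMeasurable
    (Filter.Eventually.of_forall fun z y _ => norm_gaussianWeight_smul_le hC' _ z)
    (integrable_gaussianWeight.const_mul C) (Filter.Eventually.of_forall fun z y _ => ?_)
  exact ((hasFDerivAt_comp_add_right (√s • z)).2 (hk _)).const_smul _

theorem hasDerivAt_heatExtension {k' : E → E →L[ℝ] G} (hk : ∀ x, HasFDerivAt k (k' x) x)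
    (hk' : Continuous k') (hC : ∀ z, ‖k z‖ ≤ C) (hC' : ∀ z, ‖k' z‖ ≤ C) {s : ℝ} (hs : 0 < s)
    (x : E) : HasDerivAt (fun s => heatExtension k s x)
      (∫ z, gaussianWeight z • (1 / (2 * √s)) • k' (x + √s • z) z) s := by
  have hcont : Continuous k := continuous_iff_continuousAt.2 fun x => (hk x).continuousAt
  have hC0 : 0 ≤ C := (norm_nonneg _).trans (hC 0)
  have hs2 : 0 < √(s / 2) := Real.sqrt_pos.2 (half_pos hs)
  refine (hasDerivAt_integral_of_dominated_loc_of_deriv_le (s := Set.Ioi (s / 2))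
    (bound := fun z => 1 / (2 * √(s / 2)) * C * (gaussianWeight z * (1 + ‖z‖) ^ 2))
    (F' := fun s z => gaussianWeight z • (1 / (2 * √s)) • k' (x + √s • z) z)
    (Ioi_mem_nhds (half_lt_self hs))
    (Filter.Eventually.of_forall fun s =>
      (integrable_heatExtension hcont hC s x).aestronglyMeasurable)
    (integrable_heatExtension hcont hC s x) (by fun_prop)
    (Filter.Eventually.of_forall fun z τ hτ => ?_)
    (integrable_gaussianWeight_mul_sq.const_mul _)
    (Filter.Eventually.of_forall fun z τ hτ => ?_)).2
  · have hsqrt : √(s / 2) ≤ √τ := Real.sqrt_le_sqrt (le_of_lt hτ)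
    have hz : ‖k' (x + √τ • z) z‖ ≤ C * (1 + ‖z‖) ^ 2 :=
      ((k' _).le_of_opNorm_le (hC' _) z).trans
        (mul_le_mul_of_nonneg_left (by nlinarith [norm_nonneg z]) hC0)
    calc ‖gaussianWeight z • (1 / (2 * √τ)) • k' (x + √τ • z) z‖
        = gaussianWeight z * (1 / (2 * √τ) * ‖k' (x + √τ • z) z‖) := by
          rw [norm_smul, norm_smul, norm_gaussianWeight, Real.norm_of_nonneg (by positivity)]
      _ ≤ gaussianWeight z * (1 / (2 * √(s / 2)) * (C * (1 + ‖z‖) ^ 2)) := by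
          have := (gaussianWeight_pos z).le
          gcongr
      _ = _ := by ring
  · have hτ0 : τ ≠ 0 := ((half_pos hs).trans hτ).ne'
    have hline : HasDerivAt (fun τ => x + √τ • z) ((1 / (2 * √τ)) • z) τ :=
      ((Real.hasDerivAt_sqrt hτ0).smul_const z).const_add x
    exact (((hk _).comp_hasDerivAt τ hline).congr_deriv (by simp)).const_smul _

theorem integrable_gaussianWeight_mul_inner_mul {k : E → ℝ} (hk : Continuous k)
    (hC : ∀ z, ‖k z‖ ≤ C) (e : E) : Integrable fun z => gaussianWeight z * (⟪z, e⟫ * k z) := by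
  have hC0 : 0 ≤ C := (norm_nonneg _).trans (hC 0)
  refine integrable_gaussianWeight_smul (C := ‖e‖ * C) (by fun_prop) fun z => ?_
  calc ‖⟪z, e⟫ * k z‖ ≤ ‖z‖ * ‖e‖ * C := by
        rw [norm_mul]
        gcongr
        exacts [norm_inner_le_norm z e, hC z]
    _ = ‖e‖ * C * ‖z‖ := by ring
    _ ≤ ‖e‖ * C * (1 + ‖z‖) ^ 2 := by
        gcongr
        nlinarith [norm_nonneg z]

theorem integral_gaussianWeight_mul_inner_mul {k : E → ℝ} {k' : E → E →L[ℝ] ℝ}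
    (hk : ∀ x, HasFDerivAt k (k' x) x) (hk' : Continuous k') (hC : ∀ z, ‖k z‖ ≤ C)
    (hC' : ∀ z, ‖k' z‖ ≤ C) (e : E) :
    ∫ z, gaussianWeight z * (⟪z, e⟫ * k z) = ∫ z, gaussianWeight z * k' z e := by
  have hcont : Continuous k := continuous_iff_continuousAt.2 fun x => (hk x).continuousAt
  have hC0 : 0 ≤ C := (norm_nonneg _).trans (hC 0)
  have hderiv : Integrable fun z => gaussianWeight z * k' z e :=
    integrable_gaussianWeight_smul (C := C * ‖e‖) (by fun_prop) fun z =>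
      le_mul_one_add_norm_sq ((k' z).le_of_opNorm_le (hC' z) e) (by positivity) z
  have hibp := integral_bilinear_hasFDerivAt_right_eq_neg_left_of_integrable (μ := volume)
    (f := gaussianWeight) (g := k) (v := e) (B := ContinuousLinearMap.mul ℝ ℝ)
    ((integrable_gaussianWeight_mul_inner_mul hcont hC e).neg.congr
      (Filter.Eventually.of_forall fun z => by simp; ring)) hderiv
    (integrable_gaussianWeight_smul hcont fun z => le_mul_one_add_norm_sq (hC z) hC0 z)
    (fun z _ => hasFDerivAt_gaussianWeight z) (fun z _ => hk z)
  simp only [ContinuousLinearMap.mul_apply'] at hibp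
  rw [hibp, ← integral_neg]
  exact integral_congr_ae (Filter.Eventually.of_forall fun z => by simp; ring)

theorem integral_gaussianWeight_mul_inner_self {K : E → E} {B : E → E →L[ℝ] E}
    (hK : ∀ x, HasFDerivAt K (B x) x) (hB : Continuous B) (hC : ∀ z, ‖K z‖ ≤ C)
    (hC' : ∀ z, ‖B z‖ ≤ C) :
    ∫ z, gaussianWeight z * ⟪K z, z⟫ = ∫ z, gaussianWeight z * LinearMap.trace ℝ E (B z) := by
  have hcont : Continuous K := continuous_iff_continuousAt.2 fun x => (hK x).continuousAt
  have hC0 : 0 ≤ C := (norm_nonneg _).trans (hC 0)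
  set b := stdOrthonormalBasis ℝ E
  have hcoord_le : ∀ i z, ‖⟪b i, K z⟫‖ ≤ C := fun i z =>
    (norm_inner_le_norm _ _).trans (by rw [b.norm_eq_one, one_mul]; exact hC z)
  have hcoord_fderiv_le : ∀ i z, ‖innerSL ℝ (b i) ∘L B z‖ ≤ C := fun i z => by
    refine (ContinuousLinearMap.opNorm_comp_le _ _).trans ?_
    rw [innerSL_apply_norm, b.norm_eq_one, one_mul]
    exact hC' z
  have hcoord : ∀ i, ∫ z, gaussianWeight z * (⟪z, b i⟫ * ⟪b i, K z⟫) =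
      ∫ z, gaussianWeight z * ⟪b i, B z (b i)⟫ := fun i =>
    integral_gaussianWeight_mul_inner_mul (k' := fun z => innerSL ℝ (b i) ∘L B z)
      (fun x => (innerSL ℝ (b i)).hasFDerivAt.comp x (hK x)) (by fun_prop) (hcoord_le i)
      (hcoord_fderiv_le i) (b i)
  have hint : ∀ i, Integrable fun z => gaussianWeight z * ⟪b i, B z (b i)⟫ := fun i =>
    integrable_gaussianWeight_smul (by fun_prop) fun z => le_mul_one_add_norm_sq
      (((innerSL ℝ (b i) ∘L B z).le_of_opNorm_le (hcoord_fderiv_le i z) (b i)).trans_eq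
        (by rw [b.norm_eq_one, mul_one])) hC0 z
  have hexpand : ∀ z, ⟪K z, z⟫ = ∑ i, ⟪z, b i⟫ * ⟪b i, K z⟫ := fun z => by
    rw [b.sum_inner_mul_inner, real_inner_comm]
  simp only [LinearMap.trace_eq_sum_inner _ b, ContinuousLinearMap.coe_coe, hexpand,
    Finset.mul_sum]
  rw [integral_finsetSum _ fun i _ => hint i, integral_finsetSum _ fun i _ =>
    integrable_gaussianWeight_mul_inner_mul (by fun_prop) (hcoord_le i) (b i)]
  exact Finset.sum_congr rfl fun i _ => hcoord i

namespace HasBoundedHessian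

variable {h : E → ℝ} {g : E → E} {B : E → E →L[ℝ] E}

theorem hasFDerivAt_heatExtension (hh : HasBoundedHessian C h g B) (s : ℝ) (x : E) :
    HasFDerivAt (heatExtension h s) (innerSL ℝ (heatExtension g s x)) x := by
  have hcont : Continuous g := hh.continuous_gradient
  have hnorm : ∀ z, ‖innerSL ℝ (g z)‖ ≤ C := fun z =>
    (innerSL_apply_norm ℝ (g z)).trans_le (hh.norm_gradient_le z)
  refine (_root_.hasFDerivAt_heatExtension hh.hasFDerivAt (by fun_prop) hh.norm_le hnorm
    s x).congr_fderiv ?_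
  exact (map_heatExtension ((innerSL ℝ : E →L⋆[ℝ] E →L[ℝ] ℝ) : E →L[ℝ] E →L[ℝ] ℝ) hcont
    hh.norm_gradient_le s x).symm

theorem hasFDerivAt_heatExtension_gradient (hh : HasBoundedHessian C h g B) (s : ℝ) (x : E) :
    HasFDerivAt (heatExtension g s) (heatExtension B s x) x :=
  _root_.hasFDerivAt_heatExtension hh.hasFDerivAt_gradient hh.continuous_hessian
    hh.norm_gradient_le hh.norm_hessian_le s x

theorem trace_heatExtension_hessian (hh : HasBoundedHessian C h g B) (s : ℝ) (x : E) :
    LinearMap.trace ℝ E (heatExtension B s x : E →L[ℝ] E) =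
      ∫ z, gaussianWeight z * LinearMap.trace ℝ E (B (x + √s • z)) :=
  map_heatExtension
    (LinearMap.toContinuousLinearMap (LinearMap.trace ℝ E ∘ₗ ContinuousLinearMap.coeLM ℝ))
    hh.continuous_hessian hh.norm_hessian_le s x

theorem hasDerivAt_heatExtension (hh : HasBoundedHessian C h g B) {s : ℝ} (hs : 0 < s) (x : E) :
    HasDerivAt (fun s => heatExtension h s x)
      (LinearMap.trace ℝ E (heatExtension B s x : E →L[ℝ] E) / 2) s := by
  have hcont : Continuous g := hh.continuous_gradient
  have hcontB : Continuous B := hh.continuous_hessian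
  have hsqrt : √s ≠ 0 := (Real.sqrt_pos.2 hs).ne'
  have hC0 : 0 ≤ C := (norm_nonneg _).trans (hh.norm_le 0)
  have hibp := integral_gaussianWeight_mul_inner_self (K := fun z => g (x + √s • z))
    (B := fun z => √s • B (x + √s • z)) (C := (1 + √s) * C)
    (fun z => ?_) (by fun_prop) (fun z => ?_) fun z => ?_
  · refine (_root_.hasDerivAt_heatExtension (k' := fun z => innerSL ℝ (g z)) hh.hasFDerivAt
      (by fun_prop) hh.norm_le (fun z => (innerSL_apply_norm ℝ (g z)).trans_le
        (hh.norm_gradient_le z)) hs x).congr_deriv ?_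
    have hpull : ∀ z, gaussianWeight z • (1 / (2 * √s)) • innerSL ℝ (g (x + √s • z)) z =
        1 / (2 * √s) * (gaussianWeight z * ⟪g (x + √s • z), z⟫) := fun z => by
      simp only [innerSL_apply_apply, smul_eq_mul]
      ring
    have htrace : ∀ z, gaussianWeight z * LinearMap.trace ℝ E (√s • B (x + √s • z) : E →L[ℝ] E) =
        √s * (gaussianWeight z * LinearMap.trace ℝ E (B (x + √s • z))) := fun z => by
      simp only [ContinuousLinearMap.toLinearMap_smul, map_smul, smul_eq_mul]
      ring
    simp only [hpull, integral_const_mul, hibp, htrace, hh.trace_heatExtension_hessian]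
    field_simp
  · have hline : HasFDerivAt (fun z => x + √s • z) (√s • ContinuousLinearMap.id ℝ E) z :=
      ((hasFDerivAt_id z).const_smul _).const_add x
    exact ((hh.hasFDerivAt_gradient _).comp z hline).congr_fderiv (by ext; simp)
  · exact (hh.norm_gradient_le _).trans (by nlinarith [Real.sqrt_nonneg s])
  · rw [norm_smul, Real.norm_of_nonneg (Real.sqrt_nonneg s)]
    nlinarith [Real.sqrt_nonneg s, hh.norm_hessian_le (x + √s • z)]

end HasBoundedHessian

end HeatExtension

section HopfCole

theorem neg_log_integral_add_neg_log_integral_le {Ω : Type*} [MeasurableSpace Ω] {μ : Measure Ω}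
    {f g c : Ω → ℝ} {K : ℝ} (hf : Integrable f μ) (hg : Integrable g μ) (hc : Integrable c μ)
    (hf_nonneg : ∀ z, 0 ≤ f z) (hg_nonneg : ∀ z, 0 ≤ g z) (hf_pos : 0 < ∫ z, f z ∂μ)
    (hg_pos : 0 < ∫ z, g z ∂μ) (hc_pos : 0 < ∫ z, c z ∂μ)
    (hcfg : ∀ z, c z ^ 2 ≤ Real.exp K * (f z * g z)) :
    -Real.log (∫ z, f z ∂μ) + -Real.log (∫ z, g z ∂μ) - 2 * -Real.log (∫ z, c z ∂μ) ≤ K := by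
  set a := ∫ z, f z ∂μ
  set b := ∫ z, g z ∂μ
  set D := Real.exp K * (a * b) with hD
  have hD0 : 0 < D := by positivity
  have hpoint : ∀ z, c z ≤ √D * ((f z / a + g z / b) / 2) := fun z => by
    have hf0 := hf_nonneg z
    have hg0 := hg_nonneg z
    refine (Real.le_sqrt_of_sq_le (hcfg z)).trans ((Real.sqrt_le_left (by positivity)).2 ?_)
    have hamgm : f z / a * (g z / b) ≤ ((f z / a + g z / b) / 2) ^ 2 := by
      nlinarith [sq_nonneg (f z / a - g z / b)]
    calc Real.exp K * (f z * g z) = D * (f z / a * (g z / b)) := by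
          rw [hD]
          field_simp
      _ ≤ D * ((f z / a + g z / b) / 2) ^ 2 := by gcongr
      _ = _ := by rw [mul_pow, Real.sq_sqrt hD0.le]
  have hle : ∫ z, c z ∂μ ≤ √D := by
    refine (integral_mono hc ((((hf.div_const a).add (hg.div_const b)).div_const 2).const_mul _)
      hpoint).trans_eq ?_
    simp only [Pi.add_apply]
    rw [integral_const_mul, integral_div, integral_add (hf.div_const a) (hg.div_const b),
      integral_div, integral_div, div_self hf_pos.ne', div_self hg_pos.ne', add_self_div_two,
      mul_one]
  have hlog := Real.log_le_log hc_pos hle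
  rw [Real.log_sqrt hD0.le, hD, Real.log_mul (Real.exp_pos K).ne' (by positivity), Real.log_exp,
    Real.log_mul hf_pos.ne' hg_pos.ne'] at hlog
  linarith

variable {E : Type*} [NormedAddCommGroup E] [InnerProductSpace ℝ E] [FiniteDimensional ℝ E]
  [MeasurableSpace E] [BorelSpace E]

/-- The Hopf–Cole transform `-log` of the heat extension of `h`. -/
noncomputable def hopfCole (h : E → ℝ) (s : ℝ) (x : E) : ℝ := -Real.log (heatExtension h s x)

/-- The gradient of `hopfCole h s`, where `g` is the gradient of `h`. -/
noncomputable def hopfColeGradient (h : E → ℝ) (g : E → E) (s : ℝ) (x : E) : E :=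
  -(heatExtension h s x)⁻¹ • heatExtension g s x

/-- The Hessian of `hopfCole h s`, where `g` and `B` are the gradient and the Hessian of `h`. -/
noncomputable def hopfColeHessian (h : E → ℝ) (g : E → E) (B : E → E →L[ℝ] E) (s : ℝ) (x : E) :
    E →L[ℝ] E :=
  -(heatExtension h s x)⁻¹ • heatExtension B s x +
    (innerSL ℝ (hopfColeGradient h g s x)).smulRight (hopfColeGradient h g s x)

variable {h : E → ℝ} {C : ℝ}

theorem secondDiff_hopfCole_le (hh : Continuous h) (hC : ∀ z, ‖h z‖ ≤ C)
    (hpos : ∀ z, 0 < h z) {L : ℝ}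
    (hL : ∀ a b, -Real.log (h (a + b)) + -Real.log (h (a - b)) - 2 * -Real.log (h a) ≤ L * ‖b‖ ^ 2)
    (s : ℝ) (a b : E) :
    hopfCole h s (a + b) + hopfCole h s (a - b) - 2 * hopfCole h s a ≤ L * ‖b‖ ^ 2 := by
  have hint := integrable_heatExtension hh hC s
  have hheat := heatExtension_pos hh hC hpos s
  have hsq : ∀ y, h y ^ 2 ≤ Real.exp (L * ‖b‖ ^ 2) * (h (y + b) * h (y - b)) := fun y => by
    have hlog := hL y b
    rw [← Real.log_le_log_iff (by have := hpos y; positivity)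
      (by have := hpos (y + b); have := hpos (y - b); positivity), Real.log_pow,
      Real.log_mul (Real.exp_pos _).ne' (mul_pos (hpos _) (hpos _)).ne', Real.log_exp,
      Real.log_mul (hpos _).ne' (hpos _).ne']
    push_cast
    linarith
  refine neg_log_integral_add_neg_log_integral_le (hint _) (hint _) (hint _)
    (fun z => (mul_pos (gaussianWeight_pos z) (hpos _)).le)
    (fun z => (mul_pos (gaussianWeight_pos z) (hpos _)).le) (hheat _) (hheat _) (hheat _)
    fun z => ?_
  have hz := hsq (a + √s • z)
  rw [add_right_comm, add_sub_right_comm] at hz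
  calc (gaussianWeight z * h (a + √s • z)) ^ 2
      = gaussianWeight z ^ 2 * h (a + √s • z) ^ 2 := mul_pow _ _ _
    _ ≤ gaussianWeight z ^ 2 * (Real.exp (L * ‖b‖ ^ 2) *
          (h (a + b + √s • z) * h (a - b + √s • z))) := by gcongr
    _ = _ := by
      simp only [smul_eq_mul]
      ring

theorem heatExtension_add_sqrt_smul {G : Type*} [NormedAddCommGroup G] [NormedSpace ℝ G]
    (k : E → G) (s : ℝ) (x e : E) :
    heatExtension k s (x + √s • e) = ∫ z, gaussianWeight (z - e) • k (x + √s • z) := by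
  rw [heatExtension, ← integral_sub_right_eq_self _ e]
  simp only [smul_sub, add_assoc, add_sub_cancel]

theorem secondDiff_hopfCole_le_inv (hh : Continuous h) (hC : ∀ z, ‖h z‖ ≤ C)
    (hpos : ∀ z, 0 < h z) {s : ℝ} (hs : 0 < s) (a b : E) :
    hopfCole h s (a + b) + hopfCole h s (a - b) - 2 * hopfCole h s a ≤ s⁻¹ * ‖b‖ ^ 2 := by
  have hs' : √s ≠ 0 := (Real.sqrt_pos.2 hs).ne'
  set e : E := (√s)⁻¹ • b with he
  have hb : b = √s • e := (smul_inv_smul₀ hs' b).symm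
  have hsq : s⁻¹ * ‖b‖ ^ 2 = ‖e‖ ^ 2 := by
    rw [he, norm_smul, mul_pow, norm_inv, Real.norm_of_nonneg (Real.sqrt_nonneg s), inv_pow,
      Real.sq_sqrt hs.le]
  have hadd := heatExtension_add_sqrt_smul h s a e
  have hsub : heatExtension h s (a - √s • e) =
      ∫ z, gaussianWeight (z + e) • h (a + √s • z) := by
    simpa only [smul_neg, ← sub_eq_add_neg, sub_neg_eq_add] using
      heatExtension_add_sqrt_smul h s a (-e)
  have hint : ∀ e, Integrable fun z => gaussianWeight (z - e) • h (a + √s • z) := fun e => by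
    refine ((integrable_heatExtension hh hC s (a + √s • e)).comp_sub_right e).congr
      (Filter.Eventually.of_forall fun z => ?_)
    simp only [smul_sub, add_assoc, add_sub_cancel]
  have hheat := heatExtension_pos hh hC hpos s
  have hpos_add := hheat (a + √s • e)
  have hpos_sub := hheat (a - √s • e)
  rw [hsq, hb]
  unfold hopfCole
  rw [hadd, hsub]
  rw [hadd] at hpos_add
  rw [hsub] at hpos_sub
  refine neg_log_integral_add_neg_log_integral_le (hint e)
    (by simpa only [sub_neg_eq_add] using hint (-e)) (integrable_heatExtension hh hC s a)
    (fun z => (mul_pos (gaussianWeight_pos _) (hpos _)).le)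
    (fun z => (mul_pos (gaussianWeight_pos _) (hpos _)).le) hpos_add hpos_sub (hheat a)
    fun z => le_of_eq ?_
  simp only [smul_eq_mul]
  rw [mul_pow, gaussianWeight_sub_mul_gaussianWeight_add z e]
  ring

theorem fourPoint_hopfCole_zero (hpos : ∀ z, 0 < h z) (F : ℝ → ℝ) (a θ : E) (ρ σ : ℝ) :
    fourPoint (hopfCole h 0) F a θ ρ σ = fourPoint (fun x => -Real.log (h x)) F a θ ρ σ := by
  have hW : 0 < ∫ z : E, gaussianWeight z := integral_exp_pos integrable_gaussianWeight
  have hzero : ∀ x, hopfCole h 0 x = -Real.log (∫ z : E, gaussianWeight z) - Real.log (h x) :=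
    fun x => by
      simp only [hopfCole, heatExtension, Real.sqrt_zero, zero_smul, add_zero, smul_eq_mul]
      rw [integral_mul_const, Real.log_mul hW.ne' (hpos x).ne', neg_add']
  simp only [fourPoint, hzero]
  ring

theorem heatExtension_le (hh : Continuous h) (hC : ∀ z, ‖h z‖ ≤ C) (s : ℝ) (x : E) :
    heatExtension h s x ≤ C * ∫ z : E, gaussianWeight z := by
  rw [← integral_const_mul]
  refine integral_mono (integrable_heatExtension hh hC s x)
    (integrable_gaussianWeight.const_mul C) fun z => ?_
  exact (le_abs_self _).trans (norm_gaussianWeight_smul_le hC _ z)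

namespace HasBoundedHessian

variable {g : E → E} {B : E → E →L[ℝ] E}

theorem hasFDerivAt_hopfCole (hh : HasBoundedHessian C h g B) (hpos : ∀ z, 0 < h z) (s : ℝ)
    (x : E) : HasFDerivAt (hopfCole h s) (innerSL ℝ (hopfColeGradient h g s x)) x := by
  have hv := heatExtension_pos hh.continuous hh.norm_le hpos s x
  refine ((hh.hasFDerivAt_heatExtension s x).log hv.ne').fun_neg.congr_fderiv ?_
  rw [hopfColeGradient, neg_smul, map_neg, map_smul]

theorem hasFDerivAt_hopfColeGradient (hh : HasBoundedHessian C h g B) (hpos : ∀ z, 0 < h z)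
    (s : ℝ) (x : E) : HasFDerivAt (hopfColeGradient h g s) (hopfColeHessian h g B s x) x := by
  have hv := heatExtension_pos hh.continuous hh.norm_le hpos s x
  refine (((hasDerivAt_inv hv.ne').comp_hasFDerivAt x
    (hh.hasFDerivAt_heatExtension s x)).fun_neg.smul
    (hh.hasFDerivAt_heatExtension_gradient s x)).congr_fderiv ?_
  ext e
  simp only [Function.comp_apply, neg_smul, neg_neg, add_apply, neg_apply, smul_apply,
    ContinuousLinearMap.smulRight_apply, coe_innerSL_apply, smul_eq_mul, hopfColeHessian,
    hopfColeGradient, map_neg, map_smul, smul_neg, add_right_inj]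
  module

theorem hasDerivAt_hopfCole (hh : HasBoundedHessian C h g B) (hpos : ∀ z, 0 < h z) {s : ℝ}
    (hs : 0 < s) (x : E) : HasDerivAt (fun s => hopfCole h s x)
      ((LinearMap.trace ℝ E (hopfColeHessian h g B s x) - ‖hopfColeGradient h g s x‖ ^ 2) / 2)
      s := by
  have hv := heatExtension_pos hh.continuous hh.norm_le hpos s x
  refine ((hh.hasDerivAt_heatExtension hs x).log hv.ne').fun_neg.congr_deriv ?_
  have htrace : LinearMap.trace ℝ E ((innerSL ℝ (hopfColeGradient h g s x)).smulRight
      (hopfColeGradient h g s x) : E →L[ℝ] E) = ‖hopfColeGradient h g s x‖ ^ 2 := by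
    rw [← real_inner_self_eq_norm_sq]
    exact LinearMap.trace_smulRight _ _
  rw [hopfColeHessian, ContinuousLinearMap.toLinearMap_add, map_add, htrace,
    ContinuousLinearMap.toLinearMap_smul, map_smul, smul_eq_mul]
  ring

theorem continuous_hopfCole (hh : HasBoundedHessian C h g B) (hpos : ∀ z, 0 < h z) :
    Continuous fun q : ℝ × E => hopfCole h q.1 q.2 :=
  ((continuous_heatExtension hh.continuous hh.norm_le).log fun q =>
    (heatExtension_pos hh.continuous hh.norm_le hpos q.1 q.2).ne').neg

theorem continuous_hopfColeGradient (hh : HasBoundedHessian C h g B) (hpos : ∀ z, 0 < h z) :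
    Continuous fun q : ℝ × E => hopfColeGradient h g q.1 q.2 :=
  ((continuous_heatExtension hh.continuous hh.norm_le).inv₀ fun q =>
    (heatExtension_pos hh.continuous hh.norm_le hpos q.1 q.2).ne').neg.smul
      (continuous_heatExtension hh.continuous_gradient hh.norm_gradient_le)

theorem exists_isViscousHJSolution (hh : HasBoundedHessian C h g B) (hpos : ∀ z, 0 < h z) {L : ℝ}
    (hL0 : 0 ≤ L)
    (hL : ∀ a b, -Real.log (h (a + b)) + -Real.log (h (a - b)) - 2 * -Real.log (h a) ≤ L * ‖b‖ ^ 2)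
    (T : ℝ) :
    ∃ K, 0 ≤ K ∧
      IsViscousHJSolution T K (hopfCole h) (hopfColeGradient h g) (hopfColeHessian h g B) := by
  have hv := heatExtension_pos hh.continuous hh.norm_le hpos
  have hcont := hh.continuous_hopfCole hpos
  have hcont_origin : Continuous fun s : ℝ => (s, (0 : E)) := by fun_prop
  obtain ⟨K₁, hK₁⟩ := isCompact_Icc.exists_bound_of_continuousOn
    (hcont.comp hcont_origin).continuousOn (s := Set.Icc 0 T)
  obtain ⟨K₂, hK₂⟩ := isCompact_Icc.exists_bound_of_continuousOn
    ((hh.continuous_hopfColeGradient hpos).comp hcont_origin).continuousOn (s := Set.Icc 0 T)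
  set W := Real.log (C * ∫ z : E, gaussianWeight z)
  set K := max (max K₁ K₂) |W|
  have hK0 : 0 ≤ K := (abs_nonneg W).trans (le_max_right _ _)
  have hlow : ∀ s x, -K ≤ hopfCole h s x := fun s x => neg_le_neg <|
    (Real.log_le_log (hv s x) (heatExtension_le hh.continuous hh.norm_le s x)).trans <|
      (le_abs_self W).trans (le_max_right _ _)
  have htan : ∀ s x b, hopfCole h s (x + b) ≤
      hopfCole h s x + innerSL ℝ (hopfColeGradient h g s x) b + L / 2 * ‖b‖ ^ 2 := fun s x =>
    le_tangent_add_of_secondDiff_le (secondDiff_hopfCole_le hh.continuous hh.norm_le hpos hL s)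
      (hh.hasFDerivAt_hopfCole hpos s x)
  have hu0 : ∀ s ∈ Set.Icc 0 T, hopfCole h s 0 ≤ K := fun s hs =>
    (le_abs_self _).trans ((hK₁ s hs).trans ((le_max_left _ _).trans (le_max_left _ _)))
  have hp0 : ∀ s ∈ Set.Icc 0 T, ‖innerSL ℝ (hopfColeGradient h g s 0)‖ ≤ K := fun s hs => by
    rw [innerSL_apply_norm]
    exact (hK₂ s hs).trans ((le_max_right _ _).trans (le_max_left _ _))
  refine ⟨2 * K + 2 * L, by positivity, hcont.continuousOn,
    fun s _ => hh.hasFDerivAt_hopfCole hpos s, fun s _ => hh.hasFDerivAt_hopfColeGradient hpos s,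
    fun s hs => hh.hasDerivAt_hopfCole hpos hs.1, fun s hs x => ?_, fun s hs x => ?_⟩
  · refine (abs_le_of_tangent_le hL0 (htan s) (hlow s) (hu0 s hs) (hp0 s hs) x).trans ?_
    gcongr <;> linarith
  · have hs' := Set.Ioc_subset_Icc_self hs
    rw [← innerSL_apply_norm ℝ]
    exact norm_fderiv_le_of_tangent_le hL0 (htan s) (hlow s) (hu0 s hs') (hp0 s hs') x

end HasBoundedHessian

end HopfCole

section LogCoshBarrier

/-- The function `ρ ↦ 2 log cosh (μρ) - βρ²`, the barrier of the four-point argument at a fixed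
time. -/
noncomputable def logCoshBarrier (β μ ρ : ℝ) : ℝ :=
  2 * Real.log (Real.cosh (μ * ρ)) - β * ρ ^ 2

theorem hasDerivAt_log_cosh (y : ℝ) :
    HasDerivAt (fun y => Real.log (Real.cosh y)) (Real.tanh y) y := by
  rw [Real.tanh_eq_sinh_div_cosh]
  exact (Real.hasDerivAt_cosh y).log (Real.cosh_pos y).ne'

theorem hasDerivAt_tanh (y : ℝ) : HasDerivAt Real.tanh (1 - Real.tanh y ^ 2) y := by
  have hcosh := (Real.cosh_pos y).ne'
  have hdiv := (Real.hasDerivAt_sinh y).div (Real.hasDerivAt_cosh y) hcosh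
  refine (hdiv.congr_deriv ?_).congr_of_eventuallyEq
    (Filter.Eventually.of_forall Real.tanh_eq_sinh_div_cosh)
  rw [Real.tanh_eq_sinh_div_cosh]
  field_simp

theorem log_cosh_nonneg (y : ℝ) : 0 ≤ Real.log (Real.cosh y) :=
  Real.log_nonneg (Real.one_le_cosh y)

theorem log_cosh_le_sq_div_two (y : ℝ) : Real.log (Real.cosh y) ≤ y ^ 2 / 2 :=
  (Real.log_le_iff_le_exp (Real.cosh_pos y)).2 (Real.cosh_le_exp_half_sq y)

variable {β μ α m : ℝ}

theorem hasDerivAt_logCoshBarrier (β μ ρ : ℝ) :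
    HasDerivAt (logCoshBarrier β μ) (2 * μ * Real.tanh (μ * ρ) - 2 * β * ρ) ρ := by
  have hlin : HasDerivAt (fun ρ => μ * ρ) μ ρ := hasDerivAt_const_mul μ
  refine ((((hasDerivAt_log_cosh _).comp ρ hlin).const_mul 2).sub
    ((hasDerivAt_pow 2 ρ).const_mul β)).congr_deriv ?_
  push_cast
  ring

theorem hasDerivAt_deriv_logCoshBarrier (β μ ρ : ℝ) :
    HasDerivAt (fun ρ => 2 * μ * Real.tanh (μ * ρ) - 2 * β * ρ)
      (2 * μ ^ 2 * (1 - Real.tanh (μ * ρ) ^ 2) - 2 * β) ρ := by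
  have hlin : HasDerivAt (fun ρ => μ * ρ) μ ρ := hasDerivAt_const_mul μ
  refine ((((hasDerivAt_tanh _).comp ρ hlin).const_mul (2 * μ)).sub
    (hasDerivAt_const_mul (2 * β))).congr_deriv ?_
  ring

theorem logCoshBarrier_zero (β μ : ℝ) : logCoshBarrier β μ 0 = 0 := by
  simp [logCoshBarrier]

theorem logCoshBarrier_neg (β μ ρ : ℝ) : logCoshBarrier β μ (-ρ) = logCoshBarrier β μ ρ := by
  rw [logCoshBarrier, logCoshBarrier, mul_neg, Real.cosh_neg, neg_sq]

theorem logCoshBarrier_le (β μ ρ : ℝ) : logCoshBarrier β μ ρ ≤ -(β - μ ^ 2) * ρ ^ 2 := by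
  have hlog := log_cosh_le_sq_div_two (μ * ρ)
  rw [logCoshBarrier]
  linarith [mul_pow μ ρ 2]

theorem abs_logCoshBarrier_le (hβ : 0 ≤ β) (ρ : ℝ) :
    |logCoshBarrier β μ ρ| ≤ (μ ^ 2 + β) * (1 + |ρ|) ^ 2 := by
  have hβρ : 0 ≤ β * ρ ^ 2 := by positivity
  have hμρ : 0 ≤ μ ^ 2 * ρ ^ 2 := by positivity
  have habs : |logCoshBarrier β μ ρ| ≤ (μ ^ 2 + β) * ρ ^ 2 := by
    rw [abs_le]
    refine ⟨?_, (logCoshBarrier_le β μ ρ).trans (by linarith)⟩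
    rw [logCoshBarrier]
    linarith [log_cosh_nonneg (μ * ρ)]
  refine habs.trans ?_
  rw [← sq_abs ρ]
  gcongr
  linarith

theorem abs_deriv_logCoshBarrier_le (hβ : 0 ≤ β) (hμ : 0 ≤ μ) (ρ : ℝ) :
    |2 * μ * Real.tanh (μ * ρ) - 2 * β * ρ| ≤ (2 * μ + 2 * β) * (1 + |ρ|) := by
  have htanh : |2 * μ * Real.tanh (μ * ρ)| ≤ 2 * μ := by
    rw [abs_mul, abs_of_nonneg (by positivity)]
    exact mul_le_of_le_one_right (by positivity) (Real.abs_tanh_lt_one _).le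
  have hlin : |2 * β * ρ| = 2 * β * |ρ| := by rw [abs_mul, abs_of_nonneg (by positivity)]
  have hμρ : 0 ≤ 2 * μ * |ρ| := by positivity
  refine (abs_sub _ _).trans ?_
  linarith

theorem continuousOn_logCoshBarrier_div (hα : 0 ≤ α) (m T : ℝ) :
    ContinuousOn (fun z : ℝ × ℝ => logCoshBarrier (α / (1 + α * z.1)) (m / (1 + α * z.1)) z.2)
      (Set.Icc 0 T ×ˢ Set.univ) := by
  have hne : ∀ z ∈ Set.Icc 0 T ×ˢ (Set.univ : Set ℝ), 1 + α * z.1 ≠ 0 := fun z hz => by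
    have := mul_nonneg hα hz.1.1
    positivity
  have hcoeff : ∀ c : ℝ, ContinuousOn (fun z : ℝ × ℝ => c / (1 + α * z.1))
      (Set.Icc 0 T ×ˢ Set.univ) := fun c => continuousOn_const.div (by fun_prop) hne
  refine (continuousOn_const.mul (ContinuousOn.log ?_ fun z _ => (Real.cosh_pos _).ne')).sub
    ((hcoeff α).mul (by fun_prop))
  exact Real.continuous_cosh.comp_continuousOn ((hcoeff m).mul continuousOn_snd)

theorem hasDerivAt_logCoshBarrier_div {s : ℝ} (hs : 1 + α * s ≠ 0) (m ρ : ℝ) :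
    HasDerivAt (fun s => logCoshBarrier (α / (1 + α * s)) (m / (1 + α * s)) ρ)
      ((α / (1 + α * s)) ^ 2 * ρ ^ 2 - 2 * (α / (1 + α * s)) * (m / (1 + α * s)) * ρ *
        Real.tanh (m / (1 + α * s) * ρ)) s := by
  have hinv : HasDerivAt (fun s => (1 + α * s)⁻¹) (-α / (1 + α * s) ^ 2) s :=
    ((hasDerivAt_const_mul α).const_add 1).inv hs
  have hlin : HasDerivAt (fun s => m / (1 + α * s) * ρ) (m * (-α / (1 + α * s) ^ 2) * ρ) s :=
    (hinv.const_mul m).mul_const ρ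
  refine ((((hasDerivAt_log_cosh _).comp s hlin).const_mul 2).sub
    ((hinv.const_mul α).mul_const (ρ ^ 2))).congr_deriv ?_
  field_simp
  ring

-- With `β = α / (1 + αs)` and `μ = m / (1 + αs)` the one-dimensional operator equals `β - μ²`.
theorem isFourPointBarrier_logCoshBarrier (hα : 0 ≤ α) (hm : 0 ≤ m) (T : ℝ) :
    IsFourPointBarrier T (m ^ 2 + 2 * m + 2 * α)
      (fun s => logCoshBarrier (α / (1 + α * s)) (m / (1 + α * s)))
      (fun s ρ => 2 * (m / (1 + α * s)) * Real.tanh (m / (1 + α * s) * ρ) -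
        2 * (α / (1 + α * s)) * ρ)
      (fun s ρ => 2 * (m / (1 + α * s)) ^ 2 * (1 - Real.tanh (m / (1 + α * s) * ρ) ^ 2) -
        2 * (α / (1 + α * s)))
      (fun s ρ => (α / (1 + α * s)) ^ 2 * ρ ^ 2 -
        2 * (α / (1 + α * s)) * (m / (1 + α * s)) * ρ * Real.tanh (m / (1 + α * s) * ρ)) := by
  have hdiv : ∀ {s}, 0 ≤ s → ∀ c, 0 ≤ c → 0 ≤ c / (1 + α * s) ∧ c / (1 + α * s) ≤ c :=
    fun hs c hc => ⟨by positivity, div_le_self hc (le_add_of_nonneg_right (mul_nonneg hα hs))⟩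
  refine
    { continuousOn := continuousOn_logCoshBarrier_div hα m T
      hasDerivAt := fun s _ => hasDerivAt_logCoshBarrier _ _
      hasDerivAt₁ := fun s _ => hasDerivAt_deriv_logCoshBarrier _ _
      hasDerivAt_time := fun s hs => hasDerivAt_logCoshBarrier_div ?_ m
      operator_eq := fun s _ ρ σ => by ring
      even := fun s _ => logCoshBarrier_neg _ _
      abs_le := fun s hs ρ => ?_
      abs_deriv_le := fun s hs ρ => ?_ }
  · have := mul_nonneg hα hs.1.le
    positivity
  · obtain ⟨hβ, hβα⟩ := hdiv hs.1 α hα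
    obtain ⟨hμ, hμm⟩ := hdiv hs.1 m hm
    refine (abs_logCoshBarrier_le hβ ρ).trans ?_
    gcongr ?_ * _
    linarith [pow_le_pow_left₀ hμ hμm 2]
  · obtain ⟨hβ, hβα⟩ := hdiv hs.1.le α hα
    obtain ⟨hμ, hμm⟩ := hdiv hs.1.le m hm
    refine (abs_deriv_logCoshBarrier_le hβ hμ ρ).trans ?_
    gcongr
    linarith [sq_nonneg m]

end LogCoshBarrier

section WeaklyConvexPotential

variable {E : Type*} [NormedAddCommGroup E] [InnerProductSpace ℝ E]

section FourPoint

variable {u : E → ℝ} {p : E → E} {F F₁ : ℝ → ℝ}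

theorem fourPoint_nonneg_of_neg_deriv_le_inner (hu : ∀ x, HasFDerivAt u (innerSL ℝ (p x)) x)
    (hF : ∀ τ, HasDerivAt F (F₁ τ) τ) (heven : ∀ τ, F (-τ) = F τ) {a θ : E}
    (hle : ∀ τ, 0 < τ → -F₁ τ ≤ ⟪p (a + τ • θ) - p (a - τ • θ), θ⟫) {ρ σ : ℝ} (hσ : |σ| ≤ ρ) :
    0 ≤ fourPoint u F a θ ρ σ := by
  set φ : ℝ → ℝ := fun τ => u (a + τ • θ) + u (a - τ • θ) + F τ with hφ
  have hderiv : ∀ τ, HasDerivAt φ (⟪p (a + τ • θ) - p (a - τ • θ), θ⟫ + F₁ τ) τ := fun τ => by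
    have hneg : HasDerivAt (fun τ : ℝ => u (a - τ • θ)) ⟪p (a - τ • θ), -θ⟫ τ := by
      simpa only [smul_neg, ← sub_eq_add_neg, innerSL_apply_apply] using
        hasDerivAt_comp_line (e := -θ) (hu (a + τ • -θ))
    refine (((hasDerivAt_comp_line (hu _)).add hneg).add (hF τ)).congr_deriv ?_
    rw [innerSL_apply_apply, inner_neg_right, inner_sub_left]
    ring
  have hmono : MonotoneOn φ (Set.Ici 0) :=
    monotoneOn_of_deriv_nonneg (convex_Ici 0)
      (fun τ _ => (hderiv τ).continuousAt.continuousWithinAt)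
      (fun τ _ => (hderiv τ).differentiableAt.differentiableWithinAt) fun τ hτ => by
        rw [interior_Ici] at hτ
        rw [(hderiv τ).deriv]
        linarith [hle τ hτ]
  have hφ_even : φ |σ| = φ σ := by
    rcases abs_choice σ with h | h
    · rw [h]
    · rw [h, hφ]
      simp only [neg_smul, sub_neg_eq_add, ← sub_eq_add_neg, heven]
      ring
  have hle_φ := hmono (abs_nonneg σ) ((abs_nonneg σ).trans hσ) hσ
  rw [hφ_even] at hle_φ
  simp only [hφ] at hle_φ
  rw [fourPoint]
  linarith

theorem sub_le_secondDiff_of_fourPoint_nonneg {a : E}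
    (h : ∀ θ, ‖θ‖ = 1 → ∀ ρ, 0 ≤ ρ → 0 ≤ fourPoint u F a θ ρ 0) (b : E) :
    F 0 - F ‖b‖ ≤ u (a + b) + u (a - b) - 2 * u a := by
  rcases eq_or_ne b 0 with rfl | hb
  · simp [two_mul]
  · have hfour := h _ (norm_smul_inv_norm (𝕜 := ℝ) hb) ‖b‖ (norm_nonneg b)
    simp only [fourPoint, RCLike.ofReal_real_eq_id, id_eq, smul_inv_smul₀ (norm_ne_zero_iff.2 hb),
      zero_smul, add_zero, sub_zero] at hfour
    linarith

theorem add_smul_sub_sub_smul (a θ : E) (τ : ℝ) : a + τ • θ - (a - τ • θ) = (2 * τ) • θ := by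
  module

theorem secondDiff_le_of_norm_gradient_sub_le {L : ℝ}
    (hu : ∀ x, HasFDerivAt u (innerSL ℝ (p x)) x)
    (hp : ∀ x y, ‖p x - p y‖ ≤ L * ‖x - y‖) (a b : E) :
    u (a + b) + u (a - b) - 2 * u a ≤ L * ‖b‖ ^ 2 := by
  have hneg : ∀ x, HasFDerivAt (fun x => -u x) (innerSL ℝ (-p x)) x := fun x => by
    simpa only [map_neg] using (hu x).fun_neg
  have hF : ∀ τ, HasDerivAt (fun τ : ℝ => L * τ ^ 2) (2 * L * τ) τ := fun τ =>
    ((hasDerivAt_pow 2 τ).const_mul L).congr_deriv (by push_cast; ring)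
  have hsub := sub_le_secondDiff_of_fourPoint_nonneg (fun θ hθ ρ hρ =>
    fourPoint_nonneg_of_neg_deriv_le_inner hneg hF (fun τ => by rw [neg_sq]) (a := a) (θ := θ)
      (fun τ hτ => ?_) (by rwa [abs_zero])) b
  · linarith
  · have hinner := real_inner_le_norm (p (a + τ • θ) - p (a - τ • θ)) θ
    have hnorm := hp (a + τ • θ) (a - τ • θ)
    rw [add_smul_sub_sub_smul, norm_smul, Real.norm_of_nonneg (by positivity), hθ] at hnorm
    rw [hθ] at hinner
    rw [← neg_sub', inner_neg_left]
    linarith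

end FourPoint

section ExpNeg

variable {U : E → ℝ} {P : E → E} {α c : ℝ}

theorem le_of_le_inner_gradient_sub (hU : ∀ x, HasFDerivAt U (innerSL ℝ (P x)) x)
    (hP : ∀ x, α * ‖x‖ ^ 2 - c * ‖x‖ ≤ ⟪P x - P 0, x⟫) (y : E) :
    U 0 - (‖P 0‖ + c) * ‖y‖ + α / 2 * ‖y‖ ^ 2 ≤ U y := by
  set φ : ℝ → ℝ := fun τ =>
    U (0 + τ • y) + (‖P 0‖ + c) * ‖y‖ * τ - α / 2 * ‖y‖ ^ 2 * τ ^ 2 with hφ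
  have hderiv : ∀ τ, HasDerivAt φ
      (⟪P (τ • y), y⟫ + (‖P 0‖ + c) * ‖y‖ - α * ‖y‖ ^ 2 * τ) τ := fun τ => by
    refine (((hasDerivAt_comp_line (hU _)).add (hasDerivAt_const_mul _)).sub
      ((hasDerivAt_pow 2 τ).const_mul (α / 2 * ‖y‖ ^ 2))).congr_deriv ?_
    rw [innerSL_apply_apply, zero_add]
    push_cast
    ring
  have hderiv_nonneg : ∀ τ, 0 < τ →
      0 ≤ ⟪P (τ • y), y⟫ + (‖P 0‖ + c) * ‖y‖ - α * ‖y‖ ^ 2 * τ := fun τ hτ => by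
    have hscaled := hP (τ • y)
    rw [norm_smul, Real.norm_of_nonneg hτ.le, inner_smul_right, inner_sub_left] at hscaled
    have hdiv : α * τ * ‖y‖ ^ 2 - c * ‖y‖ ≤ ⟪P (τ • y), y⟫ - ⟪P 0, y⟫ :=
      le_of_mul_le_mul_left (by linarith) hτ
    have hcs := neg_le_of_abs_le (abs_real_inner_le_norm (P 0) y)
    linarith
  have hmono : MonotoneOn φ (Set.Icc 0 1) :=
    monotoneOn_of_deriv_nonneg (convex_Icc 0 1)
      (fun τ _ => (hderiv τ).continuousAt.continuousWithinAt)
      (fun τ _ => (hderiv τ).differentiableAt.differentiableWithinAt) fun τ hτ => by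
        rw [interior_Icc] at hτ
        rw [(hderiv τ).deriv]
        exact hderiv_nonneg τ hτ.1
  have hle := hmono (Set.left_mem_Icc.2 zero_le_one) (Set.right_mem_Icc.2 zero_le_one) zero_le_one
  simp only [hφ, zero_smul, one_smul, zero_add, mul_zero, mul_one, one_pow, add_zero, sub_zero,
    ne_eq, OfNat.ofNat_ne_zero, not_false_eq_true, zero_pow] at hle
  linarith

theorem exists_exp_neg_mul_sq_le {V : Type*} [SeminormedAddCommGroup V] {U : V → ℝ} {a : ℝ}
    (hα : 0 < α) (hU : ∀ y, a - c * ‖y‖ + α / 2 * ‖y‖ ^ 2 ≤ U y) :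
    ∃ K, ∀ y, Real.exp (-U y) * (1 + ‖y‖) ^ 2 ≤ K := by
  refine ⟨2 * Real.exp (-a + 1 + (c + 1) ^ 2 / (2 * α)), fun y => ?_⟩
  have hsq : (1 + ‖y‖) ^ 2 ≤ 2 * Real.exp (1 + ‖y‖) := by
    have := Real.quadratic_le_exp_of_nonneg (show 0 ≤ 1 + ‖y‖ by positivity)
    linarith [norm_nonneg y]
  have hcomplete_sq : (c + 1) * ‖y‖ - α / 2 * ‖y‖ ^ 2 ≤ (c + 1) ^ 2 / (2 * α) := by
    rw [le_div_iff₀ (by positivity)]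
    linarith [sq_nonneg (α * ‖y‖ - (c + 1))]
  calc Real.exp (-U y) * (1 + ‖y‖) ^ 2 ≤ Real.exp (-U y) * (2 * Real.exp (1 + ‖y‖)) := by gcongr
    _ = 2 * Real.exp (-U y + (1 + ‖y‖)) := by
      rw [Real.exp_add (-U y)]
      ring
    _ ≤ _ := mul_le_mul_of_nonneg_left (Real.exp_le_exp.2 (by linarith [hU y])) zero_le_two

theorem hasFDerivAt_exp_neg (hU : ∀ x, HasFDerivAt U (innerSL ℝ (P x)) x) (x : E) :
    HasFDerivAt (fun z => Real.exp (-U z)) (innerSL ℝ (-Real.exp (-U x) • P x)) x := by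
  refine (hU x).fun_neg.exp.congr_fderiv ?_
  rw [map_smul, neg_smul, smul_neg]

theorem hasFDerivAt_neg_exp_neg_smul {H : E → E →L[ℝ] E}
    (hU : ∀ x, HasFDerivAt U (innerSL ℝ (P x)) x) (hP : ∀ x, HasFDerivAt P (H x) x) (x : E) :
    HasFDerivAt (fun z => -Real.exp (-U z) • P z)
      (Real.exp (-U x) • ((innerSL ℝ (P x)).smulRight (P x) - H x)) x := by
  refine ((hasFDerivAt_exp_neg hU x).fun_neg.smul (hP x)).congr_fderiv ?_
  ext e
  simp only [neg_smul, map_neg, map_smul, neg_neg, add_apply, neg_apply, smul_apply,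
    ContinuousLinearMap.smulRight_apply, coe_innerSL_apply, smul_eq_mul, smul_sub, sub_apply]
  module

end ExpNeg

end WeaklyConvexPotential

section IsWeaklyConvexPotential

variable {E : Type*} [NormedAddCommGroup E] [InnerProductSpace ℝ E]

/-- `U` is of class `C²` with gradient `P` and Hessian `H`, its gradient is `L`-Lipschitz, and `U`
is `(α, m²)`-weakly convex. The last condition is multiplied by `‖x - y‖²`, so that it also makes
sense for `x = y`. -/
structure IsWeaklyConvexPotential (α m L : ℝ) (U : E → ℝ) (P : E → E) (H : E → E →L[ℝ] E) :
    Prop where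
  hasFDerivAt : ∀ x, HasFDerivAt U (innerSL ℝ (P x)) x
  hasFDerivAt_gradient : ∀ x, HasFDerivAt P (H x) x
  continuous_hessian : Continuous H
  norm_gradient_sub_le : ∀ x y, ‖P x - P y‖ ≤ L * ‖x - y‖
  le_inner_gradient_sub : ∀ x y,
    α * ‖x - y‖ ^ 2 - ‖x - y‖ * (2 * m * Real.tanh (m * ‖x - y‖ / 2)) ≤ ⟪P x - P y, x - y⟫

namespace IsWeaklyConvexPotential

variable {α m L : ℝ} {U : E → ℝ} {P : E → E} {H : E → E →L[ℝ] E}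

theorem continuous (hU : IsWeaklyConvexPotential α m L U P H) : Continuous U :=
  continuous_iff_continuousAt.2 fun x => (hU.hasFDerivAt x).continuousAt

theorem continuous_gradient (hU : IsWeaklyConvexPotential α m L U P H) : Continuous P :=
  continuous_iff_continuousAt.2 fun x => (hU.hasFDerivAt_gradient x).continuousAt

theorem norm_gradient_le (hU : IsWeaklyConvexPotential α m L U P H) (hL : 0 ≤ L) (z : E) :
    ‖P z‖ ≤ (‖P 0‖ + L) * (1 + ‖z‖) := by
  have hsub := hU.norm_gradient_sub_le z 0
  rw [sub_zero] at hsub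
  have htri := norm_le_norm_add_norm_sub' (P z) (P 0)
  linarith [mul_nonneg (norm_nonneg (P 0)) (norm_nonneg z)]

theorem norm_hessian_le (hU : IsWeaklyConvexPotential α m L U P H) (hL : 0 ≤ L) (z : E) :
    ‖H z‖ ≤ L :=
  (hU.hasFDerivAt_gradient z).le_of_lip' hL
    (Filter.Eventually.of_forall fun x => hU.norm_gradient_sub_le x z)

theorem quadratic_le (hU : IsWeaklyConvexPotential α m L U P H) (hm : 0 ≤ m) (y : E) :
    U 0 - (‖P 0‖ + 2 * m) * ‖y‖ + α / 2 * ‖y‖ ^ 2 ≤ U y := by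
  refine le_of_le_inner_gradient_sub hU.hasFDerivAt (fun x => ?_) y
  have hconv := hU.le_inner_gradient_sub x 0
  rw [sub_zero] at hconv
  have htanh := mul_le_mul_of_nonneg_left (Real.tanh_lt_one (m * ‖x‖ / 2)).le
    (show 0 ≤ 2 * m * ‖x‖ by positivity)
  linarith

theorem exists_hasBoundedHessian_exp_neg (hU : IsWeaklyConvexPotential α m L U P H) (hα : 0 < α)
    (hm : 0 ≤ m) (hL : 0 ≤ L) :
    ∃ C, HasBoundedHessian C (fun z => Real.exp (-U z)) (fun z => -Real.exp (-U z) • P z)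
      (fun z => Real.exp (-U z) • ((innerSL ℝ (P z)).smulRight (P z) - H z)) := by
  obtain ⟨K, hK⟩ := exists_exp_neg_mul_sq_le hα (hU.quadratic_le hm)
  set A := ‖P 0‖ + L
  have hA0 : 0 ≤ A := by positivity
  set D := 1 + A + A ^ 2 + L with hD
  have hD0 : 0 ≤ D := by positivity
  have hbound : ∀ z r, r ≤ D * (1 + ‖z‖) ^ 2 → Real.exp (-U z) * r ≤ D * K := fun z r hr =>
    calc Real.exp (-U z) * r ≤ Real.exp (-U z) * (D * (1 + ‖z‖) ^ 2) := by gcongr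
      _ = D * (Real.exp (-U z) * (1 + ‖z‖) ^ 2) := by ring
      _ ≤ D * K := mul_le_mul_of_nonneg_left (hK z) hD0
  have hsq : ∀ z : E, 1 + ‖z‖ ≤ (1 + ‖z‖) ^ 2 := fun z =>
    le_self_pow₀ (le_add_of_nonneg_right (norm_nonneg z)) two_ne_zero
  have hP : ∀ z, ‖P z‖ ≤ A * (1 + ‖z‖) := hU.norm_gradient_le hL
  have hexp : ∀ z, ‖Real.exp (-U z)‖ = Real.exp (-U z) := fun z =>
    Real.norm_of_nonneg (by positivity)
  have hcont := hU.continuous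
  have hcont_grad := hU.continuous_gradient
  have hcont_hess := hU.continuous_hessian
  refine ⟨D * K, hasFDerivAt_exp_neg hU.hasFDerivAt,
    hasFDerivAt_neg_exp_neg_smul hU.hasFDerivAt hU.hasFDerivAt_gradient, by fun_prop,
    fun z => ?_, fun z => ?_, fun z => ?_⟩
  · simpa only [hexp, mul_one] using
      hbound z 1 (le_mul_one_add_norm_sq (by rw [hD]; linarith [sq_nonneg A]) hD0 z)
  · rw [norm_smul, norm_neg, hexp]
    refine hbound z _ ((hP z).trans ((mul_le_mul_of_nonneg_left (hsq z) hA0).trans ?_))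
    gcongr
    rw [hD]
    linarith [sq_nonneg A]
  · rw [norm_smul, hexp]
    refine hbound z _ ((norm_sub_le _ _).trans ?_)
    rw [ContinuousLinearMap.norm_smulRight_apply, innerSL_apply_norm, ← sq]
    have hP_sq := pow_le_pow_left₀ (norm_nonneg _) (hP z) 2
    have hH := le_mul_one_add_norm_sq (hU.norm_hessian_le hL z) hL z
    rw [mul_pow] at hP_sq
    have hone : 0 ≤ (1 + A) * (1 + ‖z‖) ^ 2 := by positivity
    rw [hD]
    linarith

theorem fourPoint_logCoshBarrier_nonneg (hU : IsWeaklyConvexPotential α m L U P H) {a θ : E}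
    (hθ : ‖θ‖ = 1) {ρ σ : ℝ} (hσ : |σ| ≤ ρ) :
    0 ≤ fourPoint U (logCoshBarrier α m) a θ ρ σ := by
  refine fourPoint_nonneg_of_neg_deriv_le_inner hU.hasFDerivAt (hasDerivAt_logCoshBarrier α m)
    (logCoshBarrier_neg α m) (fun τ hτ => ?_) hσ
  have hτ2 : 0 < 2 * τ := by positivity
  have hconv := hU.le_inner_gradient_sub (a + τ • θ) (a - τ • θ)
  rw [add_smul_sub_sub_smul, norm_smul, hθ, Real.norm_of_nonneg hτ2.le, inner_smul_right, mul_one,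
    show m * (2 * τ) / 2 = m * τ by ring] at hconv
  exact le_of_mul_le_mul_left (by linarith) hτ2

theorem comp_smul (hU : IsWeaklyConvexPotential α m L U P H) {c : ℝ} (hc : 0 ≤ c) :
    IsWeaklyConvexPotential (c ^ 2 * α) (c * m) (c ^ 2 * L) (fun x => U (c • x))
      (fun x => c • P (c • x)) (fun x => c ^ 2 • H (c • x)) := by
  have hsmul : ∀ x : E, HasFDerivAt (fun x : E => c • x) (c • ContinuousLinearMap.id ℝ E) x :=
    fun x => (hasFDerivAt_id x).const_smul c
  have hnorm : ∀ x : E, ‖c • x‖ = c * ‖x‖ := fun x => by rw [norm_smul, Real.norm_of_nonneg hc]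
  refine ⟨fun x => ?_, fun x => ?_, ?_, fun x y => ?_, fun x y => ?_⟩
  · refine ((hU.hasFDerivAt (c • x)).comp x (hsmul x)).congr_fderiv ?_
    rw [ContinuousLinearMap.comp_smul, ContinuousLinearMap.comp_id, map_smul]
  · refine (((hU.hasFDerivAt_gradient (c • x)).comp x (hsmul x)).const_smul c).congr_fderiv ?_
    rw [ContinuousLinearMap.comp_smul, ContinuousLinearMap.comp_id, smul_smul, sq]
  · exact (hU.continuous_hessian.comp (continuous_const_smul c)).const_smul (c ^ 2)
  · have hlip := mul_le_mul_of_nonneg_left (hU.norm_gradient_sub_le (c • x) (c • y)) hc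
    rw [← smul_sub, hnorm] at hlip
    rw [← smul_sub, hnorm]
    linarith
  · have hconv := hU.le_inner_gradient_sub (c • x) (c • y)
    rw [← smul_sub, hnorm, inner_smul_right] at hconv
    rw [← smul_sub, inner_smul_left, conj_trivial,
      show c * m * ‖x - y‖ / 2 = m * (c * ‖x - y‖) / 2 by ring]
    linarith

variable [FiniteDimensional ℝ E] [MeasurableSpace E] [BorelSpace E]

theorem fourPoint_hopfCole_nonneg (hU : IsWeaklyConvexPotential α m L U P H) (hα : 0 < α)
    (hm : 0 ≤ m) (hL : 0 ≤ L) {s : ℝ} (hs : 0 ≤ s) (a : E) {θ : E} (hθ : ‖θ‖ = 1) {ρ σ : ℝ}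
    (hσ : |σ| ≤ ρ) :
    0 ≤ fourPoint (hopfCole (fun z => Real.exp (-U z)) s)
      (logCoshBarrier (α / (1 + α * s)) (m / (1 + α * s))) a θ ρ σ := by
  obtain ⟨C, hh⟩ := hU.exists_hasBoundedHessian_exp_neg hα hm hL
  have hpos : ∀ z, 0 < Real.exp (-U z) := fun z => Real.exp_pos _
  obtain ⟨K, hK, hu⟩ := hh.exists_isViscousHJSolution hpos hL (fun a b => by
    simpa only [Real.log_exp, neg_neg] using
      secondDiff_le_of_norm_gradient_sub_le hU.hasFDerivAt hU.norm_gradient_sub_le a b) s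
  have hF := isFourPointBarrier_logCoshBarrier hα.le hm s
  have hK' : 0 ≤ m ^ 2 + 2 * m + 2 * α := by positivity
  refine fourPoint_nonneg (hu.mono (le_add_of_nonneg_right hK'))
    (hF.mono (le_add_of_nonneg_left hK)) (by positivity) (fun b ω ρ' σ' hω hσ' => ?_)
    ⟨hs, le_rfl⟩ a hθ hσ
  simp only [fourPoint_hopfCole_zero hpos, mul_zero, add_zero, div_one, Real.log_exp, neg_neg]
  exact hU.fourPoint_logCoshBarrier_nonneg hω hσ'

theorem le_secondDiff_hopfCole (hU : IsWeaklyConvexPotential α m L U P H) (hα : 0 < α)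
    (hm : 0 ≤ m) (hL : 0 ≤ L) {s : ℝ} (hs : 0 ≤ s) (a b : E) :
    (α / (1 + α * s) - (m / (1 + α * s)) ^ 2) * ‖b‖ ^ 2 ≤
      hopfCole (fun z => Real.exp (-U z)) s (a + b) + hopfCole (fun z => Real.exp (-U z)) s (a - b)
        - 2 * hopfCole (fun z => Real.exp (-U z)) s a := by
  have hsub := sub_le_secondDiff_of_fourPoint_nonneg
    (fun θ hθ ρ hρ => hU.fourPoint_hopfCole_nonneg hα hm hL hs a hθ (by rwa [abs_zero])) b
  rw [logCoshBarrier_zero] at hsub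
  linarith [logCoshBarrier_le (α / (1 + α * s)) (m / (1 + α * s)) ‖b‖]

theorem secondDiff_hopfCole_le_min (hU : IsWeaklyConvexPotential α m L U P H) (hα : 0 < α)
    (hm : 0 ≤ m) (hL : 0 ≤ L) {s : ℝ} (hs : 0 < s) (a b : E) :
    hopfCole (fun z => Real.exp (-U z)) s (a + b) + hopfCole (fun z => Real.exp (-U z)) s (a - b)
        - 2 * hopfCole (fun z => Real.exp (-U z)) s a ≤ min (1 / s) L * ‖b‖ ^ 2 := by
  obtain ⟨C, hh⟩ := hU.exists_hasBoundedHessian_exp_neg hα hm hL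
  have hpos : ∀ z, 0 < Real.exp (-U z) := fun z => Real.exp_pos _
  rw [min_mul_of_nonneg _ _ (sq_nonneg _), one_div]
  refine le_min (secondDiff_hopfCole_le_inv hh.continuous hh.norm_le hpos hs a b)
    (secondDiff_hopfCole_le hh.continuous hh.norm_le hpos (fun a b => ?_) s a b)
  simpa only [Real.log_exp, neg_neg] using
    secondDiff_le_of_norm_gradient_sub_le hU.hasFDerivAt hU.norm_gradient_sub_le a b

theorem norm_gradient_hopfCole_sub_le (hU : IsWeaklyConvexPotential α m L U P H) (hα : 0 < α)
    (hm : 0 ≤ m) (hL : 0 ≤ L) {s : ℝ} (hs : 0 < s) (x y : E) :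
    ‖gradient (hopfCole (fun z => Real.exp (-U z)) s) x -
        gradient (hopfCole (fun z => Real.exp (-U z)) s) y‖ ≤
      max (min (1 / s) L) (-(α / (1 + α * s) - (m / (1 + α * s)) ^ 2)) * ‖x - y‖ := by
  obtain ⟨C, hh⟩ := hU.exists_hasBoundedHessian_exp_neg hα hm hL
  refine norm_sub_le_of_abs_secondDiff_le (fun x => ?_)
    (fun a b => (hU.secondDiff_hopfCole_le_min hα hm hL hs a b).trans ?_)
    (fun a b => le_trans ?_ (hU.le_secondDiff_hopfCole hα hm hL hs.le a b)) x y
  · have := hh.hasFDerivAt_hopfCole (fun z => Real.exp_pos _) s x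
    exact this.differentiableAt.hasGradientAt.hasFDerivAt
  · gcongr
    exact le_max_left _ _
  · rw [← neg_mul]
    gcongr
    exact neg_le.1 (le_max_right _ _)

end IsWeaklyConvexPotential

end IsWeaklyConvexPotential

theorem integral_eq_pow_finrank_mul_integral_add_smul {E : Type*} [NormedAddCommGroup E]
    [NormedSpace ℝ E] [FiniteDimensional ℝ E] [MeasurableSpace E] [BorelSpace E] (μ : Measure E)
    [μ.IsAddHaarMeasure] (φ : E → ℝ) (b : E) {R : ℝ} (hR : 0 < R) :
    ∫ y, φ y ∂μ = R ^ Module.finrank ℝ E * ∫ z, φ (b + R • z) ∂μ := by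
  have hsmul := Measure.integral_comp_smul μ (fun y => φ (b + y)) R
  rw [integral_add_left_eq_self, abs_of_pos (by positivity), smul_eq_mul] at hsmul
  rw [hsmul, mul_inv_cancel_left₀ (by positivity)]

section ForwardProcess

variable {f g : ℝ → ℝ} {t : ℝ}

theorem intervalIntegrable_of_continuousOn_Ici (hf : ContinuousOn f (Set.Ici 0)) {a b : ℝ}
    (ha : 0 ≤ a) (hb : 0 ≤ b) : IntervalIntegrable f volume a b :=
  (hf.mono ((convex_Ici 0).ordConnected.uIcc_subset ha hb)).intervalIntegrable

theorem Jfg_pos (hf : ContinuousOn f (Set.Ici 0)) (hg : ContinuousOn g (Set.Ici 0))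
    (hg_pos : ∀ s, 0 < s → 0 < g s) (ht : 0 < t) : 0 < Jfg f g t := by
  have hsub : Set.uIcc 0 t ⊆ Set.Ici (0 : ℝ) :=
    (convex_Ici 0).ordConnected.uIcc_subset Set.self_mem_Ici ht.le
  have hprimitive : ContinuousOn (fun s => ∫ v in (0 : ℝ)..s, f v) (Set.uIcc 0 t) :=
    intervalIntegral.continuousOn_primitive_interval
      ((hf.mono hsub).integrableOn_compact isCompact_uIcc)
  refine intervalIntegral.intervalIntegral_pos_of_pos_on ?_ (fun s hs => ?_) ht
  · exact (((hprimitive.const_mul 2).rexp).mul ((hg.mono hsub).pow 2)).intervalIntegrable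
  · have := hg_pos s hs.1
    positivity

theorem Jfg_eq_c0_sq_mul_c1 (hf : ContinuousOn f (Set.Ici 0)) (ht : 0 ≤ t) :
    Jfg f g t = c0 f t ^ 2 * c1 f g t := by
  rw [Jfg, c1, ← intervalIntegral.integral_const_mul]
  refine intervalIntegral.integral_congr fun s hs => ?_
  rw [Set.uIcc_of_le ht] at hs
  have hadd := intervalIntegral.integral_add_adjacent_intervals
    (intervalIntegrable_of_continuousOn_Ici hf le_rfl hs.1)
    (intervalIntegrable_of_continuousOn_Ici hf hs.1 ht)
  simp only [c0]
  rw [← hadd, ← mul_assoc, ← Real.exp_nat_mul, ← Real.exp_add]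
  congr 2
  push_cast
  ring

theorem c0_pos (f : ℝ → ℝ) (t : ℝ) : 0 < c0 f t := Real.exp_pos _

theorem c1_pos (hf : ContinuousOn f (Set.Ici 0)) (hg : ContinuousOn g (Set.Ici 0))
    (hg_pos : ∀ s, 0 < s → 0 < g s) (ht : 0 < t) : 0 < c1 f g t := by
  have hJ := Jfg_pos hf hg hg_pos ht
  rw [Jfg_eq_c0_sq_mul_c1 hf ht.le] at hJ
  exact pos_of_mul_pos_right hJ (sq_nonneg _)

theorem Lt_eq {α₀ M₀ : ℝ} (hα₀ : 0 < α₀) (hM₀ : 0 ≤ M₀) (L₀ : ℝ) (hs : 0 < c1 f g t)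
    (hJ : Jfg f g t = c0 f t ^ 2 * c1 f g t) :
    Lt f g α₀ M₀ L₀ t = max (min (1 / c1 f g t) (c0 f t ^ 2 * L₀))
      (-(c0 f t ^ 2 * α₀ / (1 + c0 f t ^ 2 * α₀ * c1 f g t) -
        (c0 f t * √M₀ / (1 + c0 f t ^ 2 * α₀ * c1 f g t)) ^ 2)) := by
  have hc := c0_pos f t
  have hα : alphaT f g α₀ t = c0 f t ^ 2 * α₀ / (1 + c0 f t ^ 2 * α₀ * c1 f g t) := by
    rw [alphaT]
    field_simp
  have hM : MT f g α₀ M₀ t = (c0 f t * √M₀ / (1 + c0 f t ^ 2 * α₀ * c1 f g t)) ^ 2 := by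
    rw [MT, hJ, div_pow, mul_pow, Real.sq_sqrt hM₀]
    ring
  rw [Lt, hα, hM]

variable {d : ℕ} {p₀ : EuclideanSpace ℝ (Fin d) → ℝ}

-- Substitute `y = c₀(t) (x + √c₁(t) z)`.
theorem exists_pt_eq_mul_heatExtension (p₀ : EuclideanSpace ℝ (Fin d) → ℝ) (hs : 0 < c1 f g t) :
    ∃ A, 0 < A ∧ ∀ x,
      pt f g p₀ t x = A * heatExtension (fun z => p₀ (c0 f t • z)) (c1 f g t) x := by
  have hc := c0_pos f t
  have hsqrt := Real.sqrt_pos.2 hs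
  have hR : 0 < c0 f t * √(c1 f g t) := mul_pos hc hsqrt
  refine ⟨(2 * Real.pi * c1 f g t) ^ (-(d : ℝ) / 2) * (c0 f t * √(c1 f g t)) ^
    Module.finrank ℝ (EuclideanSpace ℝ (Fin d)), by positivity, fun x => ?_⟩
  simp only [pt, mul_assoc ((2 * Real.pi * c1 f g t) ^ (-(d : ℝ) / 2))]
  rw [integral_const_mul, integral_eq_pow_finrank_mul_integral_add_smul volume _ (c0 f t • x) hR,
    heatExtension]
  congr! 4 with z
  rw [mul_smul, ← smul_add, inv_smul_smul₀ hc.ne', sub_add_cancel_left, norm_neg, norm_smul,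
    Real.norm_of_nonneg hsqrt.le, mul_pow, Real.sq_sqrt hs.le, gaussianWeight, smul_eq_mul]
  congr 2
  field_simp

theorem gradient_log_pt (hs : 0 < c1 f g t)
    (hpos : ∀ x, 0 < heatExtension (fun z => p₀ (c0 f t • z)) (c1 f g t) x)
    (x : EuclideanSpace ℝ (Fin d)) :
    gradient (fun z => Real.log (pt f g p₀ t z)) x =
      -gradient (hopfCole (fun z => p₀ (c0 f t • z)) (c1 f g t)) x := by
  obtain ⟨A, hA, hpt⟩ := exists_pt_eq_mul_heatExtension p₀ hs
  have hlog : (fun z => Real.log (pt f g p₀ t z)) = fun z =>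
      Real.log A - hopfCole (fun z => p₀ (c0 f t • z)) (c1 f g t) z := funext fun z => by
    rw [hpt, Real.log_mul hA.ne' (hpos z).ne', hopfCole, sub_neg_eq_add]
  rw [hlog, gradient, fderiv_const_sub, map_neg, gradient]

theorem norm_gradient_log_pt_sub_le {α m L : ℝ}
    {P : EuclideanSpace ℝ (Fin d) → EuclideanSpace ℝ (Fin d)}
    {H : EuclideanSpace ℝ (Fin d) → EuclideanSpace ℝ (Fin d) →L[ℝ] EuclideanSpace ℝ (Fin d)}
    (hU : IsWeaklyConvexPotential α m L (fun x => -Real.log (p₀ x)) P H) (hp₀ : ∀ x, 0 < p₀ x)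
    (hα : 0 < α) (hm : 0 ≤ m) (hL : 0 ≤ L) (hs : 0 < c1 f g t) (x y : EuclideanSpace ℝ (Fin d)) :
    ‖gradient (fun z => Real.log (pt f g p₀ t z)) x -
        gradient (fun z => Real.log (pt f g p₀ t z)) y‖ ≤
      max (min (1 / c1 f g t) (c0 f t ^ 2 * L))
        (-(c0 f t ^ 2 * α / (1 + c0 f t ^ 2 * α * c1 f g t) -
          (c0 f t * m / (1 + c0 f t ^ 2 * α * c1 f g t)) ^ 2)) * ‖x - y‖ := by
  have hc := c0_pos f t
  have hV := hU.comp_smul hc.le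
  have hα' : 0 < c0 f t ^ 2 * α := by positivity
  have hm' : 0 ≤ c0 f t * m := by positivity
  have hL' : 0 ≤ c0 f t ^ 2 * L := by positivity
  obtain ⟨C, hh⟩ := hV.exists_hasBoundedHessian_exp_neg hα' hm' hL'
  have hpos := heatExtension_pos hh.continuous hh.norm_le (fun z => Real.exp_pos _) (c1 f g t)
  have hgrad := hV.norm_gradient_hopfCole_sub_le hα' hm' hL' hs x y
  simp only [neg_neg, Real.exp_log (hp₀ _)] at hpos hgrad
  rwa [gradient_log_pt hs hpos, gradient_log_pt hs hpos, ← neg_sub', norm_neg]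

end ForwardProcess

section Profile

variable {d : ℕ} {u : EuclideanSpace ℝ (Fin d) → ℝ} {α M L : ℝ}

theorem profile_le (hL : ∀ x y, ‖gradient u x - gradient u y‖ ≤ L * ‖x - y‖)
    {x y : EuclideanSpace ℝ (Fin d)} (hxy : x ≠ y) :
    profile u ‖x - y‖ ≤ ⟪gradient u x - gradient u y, x - y⟫ / ‖x - y‖ ^ 2 := by
  refine csInf_le ⟨-L, ?_⟩ ⟨x, y, rfl, rfl⟩
  rintro _ ⟨a, b, hab, rfl⟩
  have hab_pos : 0 < ‖a - b‖ := hab ▸ norm_sub_pos_iff.2 hxy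
  rw [le_div_iff₀ (by positivity)]
  have hcs := neg_le_of_abs_le (abs_real_inner_le_norm (gradient u a - gradient u b) (a - b))
  linarith [mul_le_mul_of_nonneg_right (hL a b) hab_pos.le]

theorem WeaklyConvex.le_inner_gradient_sub (hu : WeaklyConvex u α M)
    (hL : ∀ x y, ‖gradient u x - gradient u y‖ ≤ L * ‖x - y‖) (x y : EuclideanSpace ℝ (Fin d)) :
    α * ‖x - y‖ ^ 2 - ‖x - y‖ * fM M ‖x - y‖ ≤ ⟪gradient u x - gradient u y, x - y⟫ := by
  rcases eq_or_ne x y with rfl | hxy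
  · simp
  have hr : 0 < ‖x - y‖ := norm_sub_pos_iff.2 hxy
  have hle := (hu _ hr).trans (profile_le hL hxy)
  rw [le_div_iff₀ (by positivity)] at hle
  refine le_trans (le_of_eq ?_) hle
  field_simp

theorem WeaklyConvex.isWeaklyConvexPotential (hu : WeaklyConvex u α M) (hdiff : ContDiff ℝ 2 u)
    (hL : ∀ x y, ‖gradient u x - gradient u y‖ ≤ L * ‖x - y‖) :
    IsWeaklyConvexPotential α (√M) L u (gradient u) (fderiv ℝ (gradient u)) := by
  have hgrad : ContDiff ℝ 1 (gradient u) :=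
    (InnerProductSpace.toDual ℝ _).symm.contDiff.comp (hdiff.fderiv_right one_add_one_eq_two.le)
  exact ⟨fun x => (hdiff.differentiable two_ne_zero x).hasGradientAt.hasFDerivAt,
    fun x => (hgrad.differentiable one_ne_zero x).hasFDerivAt,
    hgrad.continuous_fderiv one_ne_zero, hL, hu.le_inner_gradient_sub hL⟩

theorem gradient_neg (u : EuclideanSpace ℝ (Fin d) → ℝ) (x : EuclideanSpace ℝ (Fin d)) :
    gradient (fun z => -u z) x = -gradient u x := by
  rw [gradient, fderiv_fun_neg, map_neg, gradient]

end Profile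

theorem stmt7_general {d : ℕ} (f g : ℝ → ℝ)
    (hf_cont : ContinuousOn f (Set.Ici 0)) (hg_cont : ContinuousOn g (Set.Ici 0))
    (hg_pos : ∀ t, 0 < t → 0 < g t)
    (α₀ M₀ L₀ : ℝ) (hα₀ : 0 < α₀) (hM₀ : 0 ≤ M₀) (hL₀ : 0 ≤ L₀)
    (p₀ : EuclideanSpace ℝ (Fin d) → ℝ) (hp₀_pos : ∀ x, 0 < p₀ x)
    (hp₀_smooth : ContDiff ℝ 2 p₀)
    (hp₀_conc : WeaklyConcave (fun x => Real.log (p₀ x)) α₀ M₀)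
    (hp₀_lip : ∀ x y : EuclideanSpace ℝ (Fin d),
      ‖gradient (fun z => Real.log (p₀ z)) x -
          gradient (fun z => Real.log (p₀ z)) y‖ ≤ L₀ * ‖x - y‖)
    (t : ℝ) (ht : 0 < t) (x y : EuclideanSpace ℝ (Fin d)) :
    ‖gradient (fun z => Real.log (pt f g p₀ t z)) x -
        gradient (fun z => Real.log (pt f g p₀ t z)) y‖ ≤
      Lt f g α₀ M₀ L₀ t * ‖x - y‖ := by
  have hs := c1_pos hf_cont hg_cont hg_pos ht
  have hU := WeaklyConvex.isWeaklyConvexPotential hp₀_conc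
    (hp₀_smooth.log fun x => (hp₀_pos x).ne').neg fun x y => by
      rw [gradient_neg, gradient_neg, ← neg_sub', norm_neg]
      exact hp₀_lip x y
  rw [Lt_eq hα₀ hM₀ L₀ hs (Jfg_eq_c0_sq_mul_c1 hf_cont ht.le)]
  exact norm_gradient_log_pt_sub_le hU hp₀_pos hα₀ (Real.sqrt_nonneg M₀) hL₀ hs x y

theorem stmt7 {d : ℕ} (hd : 1 ≤ d) (f g : ℝ → ℝ)
    (hf_cont : ContinuousOn f (Set.Ici 0)) (hg_cont : ContinuousOn g (Set.Ici 0))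
    (hf_nonneg : ∀ t, 0 ≤ t → 0 ≤ f t) (hg_pos : ∀ t, 0 < t → 0 < g t)
    (α₀ M₀ L₀ : ℝ) (hα₀ : 0 < α₀) (hM₀ : 0 < M₀) (hL₀ : 0 < L₀)
    (p₀ : EuclideanSpace ℝ (Fin d) → ℝ) (hp₀_pos : ∀ x, 0 < p₀ x)
    (hp₀_smooth : ContDiff ℝ 2 p₀) (hp₀_prob : ∫ x, p₀ x = 1)
    (hp₀_conc : WeaklyConcave (fun x => Real.log (p₀ x)) α₀ M₀)
    (hp₀_lip : ∀ x y : EuclideanSpace ℝ (Fin d),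
      ‖gradient (fun z => Real.log (p₀ z)) x -
          gradient (fun z => Real.log (p₀ z)) y‖ ≤ L₀ * ‖x - y‖) :
    ∀ t : ℝ, 0 < t → ∀ x y : EuclideanSpace ℝ (Fin d),
      ‖gradient (fun z => Real.log (pt f g p₀ t z)) x -
          gradient (fun z => Real.log (pt f g p₀ t z)) y‖ ≤
        Lt f g α₀ M₀ L₀ t * ‖x - y‖ :=
  stmt7_general f g hf_cont hg_cont hg_pos α₀ M₀ L₀ hα₀ hM₀.le hL₀.le p₀ hp₀_pos hp₀_smooth
    hp₀_conc hp₀_lip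
end

section
/- (Continuous-time contraction for the probability flow ODE.) Let d ≥ 1, T > 0, let f, g : [0, T] → ℝ be continuous with f ≥ 0, let K : [0, T] → ℝ be continuous, and let s : [0, T] × ℝ^d → ℝ^d satisfy ⟨s(u, a) − s(u, b), a − b⟩ ≤ −K(u) ‖a − b‖² for all u ∈ [0, T] and a, b ∈ ℝ^d. Suppose x, y : [0, T] → ℝ^d are differentiable and satisfy x'(t) = f(T−t) x(t) + (1/2) g(T−t)² s(T−t, x(t)) and y'(t) = f(T−t) y(t) + (1/2) g(T−t)² s(T−t, y(t)) for all t ∈ [0, T]. Then for every t ∈ [0, T]: ‖x(t) − y(t)‖² ≤ exp( ∫₀ᵗ ( 2 f(T−u) − g(T−u)² K(T−u) ) du ) · ‖x(0) − y(0)‖². -/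
open scoped RealInnerProductSpace

/-!
Adding `f • id` to a field and scaling it by the nonnegative weight `g² / 2` act on one-sided
Lipschitz constants in the obvious way, so at forward time `u` the probability flow field has
constant `L = f - g² K / 2`. If `x` and `y` solve an ODE whose field has one-sided Lipschitz
constant `L`, then `‖x - y‖²` has derivative `2 ⟪x - y, ẋ - ẏ⟫ ≤ 2 L ‖x - y‖²`, and Grönwall's
inequality with a time-dependent rate integrates this to the claim.
-/

section Gronwall

open Set MeasureTheory

variable {a b t : ℝ}

theorem hasDerivWithinAt_integral_Ici_of_continuousOn_Icc {E : Type*} [NormedAddCommGroup E]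
    [NormedSpace ℝ E] [CompleteSpace E] {φ : ℝ → E} (hφ : ContinuousOn φ (Icc a b))
    (ht : t ∈ Ico a b) :
    HasDerivWithinAt (fun r ↦ ∫ τ in a..r, φ τ) (φ t) (Ici t) t := by
  have hIcc : Icc a b ∈ nhdsWithin t (Ioi t) := Icc_mem_nhdsGT_of_mem ht
  have hφ_int : IntervalIntegrable φ volume a t :=
    (hφ.mono (Icc_subset_Icc_right ht.2.le)).intervalIntegrable_of_Icc ht.1
  exact intervalIntegral.integral_hasDerivWithinAt_right hφ_int
    ((hφ.stronglyMeasurableAtFilter_nhdsWithin measurableSet_Icc t).filter_mono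
      (nhdsWithin_le_of_mem hIcc))
    ((hφ t (Ico_subset_Icc_self ht)).mono_of_mem_nhdsWithin hIcc)

theorem le_exp_integral_mul_of_deriv_right_le_mul {L u u' : ℝ → ℝ}
    (hL : ContinuousOn L (Icc a b)) (hu : ContinuousOn u (Icc a b))
    (hu' : ∀ r ∈ Ico a b, HasDerivWithinAt u (u' r) (Ici r) r)
    (hle : ∀ r ∈ Ico a b, u' r ≤ L r * u r) (ht : t ∈ Icc a b) :
    u t ≤ Real.exp (∫ τ in a..t, L τ) * u a := by
  let I : ℝ → ℝ := fun r ↦ ∫ τ in a..r, L τ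
  have hab : a ≤ b := ht.1.trans ht.2
  have hI : ContinuousOn I (Icc a b) := by
    rw [← uIcc_of_le hab] at hL ⊢
    exact intervalIntegral.continuousOn_primitive_interval hL.integrableOn_uIcc
  have hderiv : ∀ r ∈ Ico a b, HasDerivWithinAt (fun r ↦ Real.exp (-I r) * u r)
      (Real.exp (-I r) * -L r * u r + Real.exp (-I r) * u' r) (Ici r) r := fun r hr ↦
    (hasDerivWithinAt_integral_Ici_of_continuousOn_Icc hL hr).fun_neg.exp.fun_mul (hu' r hr)
  have hderiv_nonpos : ∀ r ∈ Ico a b,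
      Real.exp (-I r) * -L r * u r + Real.exp (-I r) * u' r ≤ 0 := fun r hr ↦ by
    have := mul_le_mul_of_nonneg_left (hle r hr) (Real.exp_pos (-I r)).le
    linarith
  have hdecay : Real.exp (-I t) * u t ≤ u a :=
    image_le_of_deriv_right_le_deriv_boundary (B := fun _ ↦ u a) (hI.neg.rexp.mul hu) hderiv
      (by simp [I]) continuousOn_const (fun r _ ↦ hasDerivWithinAt_const r _ _) hderiv_nonpos ht
  rwa [Real.exp_neg, inv_mul_le_iff₀ (Real.exp_pos _)] at hdecay

end Gronwall

section OneSidedLipschitz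

open Set

variable {E : Type*} [NormedAddCommGroup E] [InnerProductSpace ℝ E] {L M c : ℝ} {v w : E → E}

/-- The one-sided Lipschitz condition on a vector field `v`, which controls how fast integral
curves of `v` separate. The constant `L` may be negative, in which case `v` is contracting. -/
def IsOneSidedLipschitz (L : ℝ) (v : E → E) : Prop :=
  ∀ p q, ⟪v p - v q, p - q⟫ ≤ L * ‖p - q‖ ^ 2

namespace IsOneSidedLipschitz

theorem add (hv : IsOneSidedLipschitz L v) (hw : IsOneSidedLipschitz M w) :
    IsOneSidedLipschitz (L + M) fun p ↦ v p + w p := fun p q ↦ by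
  rw [add_sub_add_comm, inner_add_left, add_mul]
  exact add_le_add (hv p q) (hw p q)

theorem const_smul (hc : 0 ≤ c) (hv : IsOneSidedLipschitz L v) :
    IsOneSidedLipschitz (c * L) fun p ↦ c • v p := fun p q ↦ by
  rw [← smul_sub, real_inner_smul_left, mul_assoc]
  exact mul_le_mul_of_nonneg_left (hv p q) hc

end IsOneSidedLipschitz

theorem isOneSidedLipschitz_smul_id (c : ℝ) : IsOneSidedLipschitz c fun p : E ↦ c • p :=
  fun p q ↦ by rw [← smul_sub, real_inner_smul_left, real_inner_self_eq_norm_sq]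

theorem norm_sub_sq_le_exp_integral_of_isOneSidedLipschitz {a b t : ℝ} {L : ℝ → ℝ}
    {v : ℝ → E → E} {x y : ℝ → E} (hL : ContinuousOn L (Icc a b))
    (hv : ∀ r ∈ Ico a b, IsOneSidedLipschitz (L r) (v r))
    (hx : IsIntegralCurveOn x v (Icc a b)) (hy : IsIntegralCurveOn y v (Icc a b))
    (ht : t ∈ Icc a b) :
    ‖x t - y t‖ ^ 2 ≤ Real.exp (∫ τ in a..t, 2 * L τ) * ‖x a - y a‖ ^ 2 := by
  have hderiv : ∀ r ∈ Icc a b, HasDerivWithinAt (fun r ↦ ‖x r - y r‖ ^ 2)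
      (2 * ⟪x r - y r, v r (x r) - v r (y r)⟫) (Icc a b) r := fun r hr ↦
    ((hx r hr).sub (hy r hr)).norm_sq
  refine le_exp_integral_mul_of_deriv_right_le_mul (L := fun r ↦ 2 * L r) (by fun_prop)
    (fun r hr ↦ (hderiv r hr).continuousWithinAt)
    (fun r hr ↦ (hderiv r (Ico_subset_Icc_self hr)).mono_of_mem_nhdsWithin
      (Icc_mem_nhdsGE_of_mem hr))
    (fun r hr ↦ ?_) ht
  rw [real_inner_comm, mul_assoc]
  exact mul_le_mul_of_nonneg_left (hv r hr (x r) (y r)) zero_le_two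

end OneSidedLipschitz

section ProbabilityFlow

open Set

variable {E : Type*} [NormedAddCommGroup E] [InnerProductSpace ℝ E] {f g K : ℝ → ℝ}
  {s : ℝ → E → E}

/-- The vector field of the probability flow ODE with drift coefficient `f`, diffusion coefficient
`g` and score `s`, indexed by the forward time `u`; sampling follows it at `u = T - t`. -/
noncomputable def probabilityFlowField (f g : ℝ → ℝ) (s : ℝ → E → E) (u : ℝ) (p : E) : E :=
  f u • p + ((1 / 2) * g u ^ 2) • s u p

theorem IsOneSidedLipschitz.probabilityFlowField {u k : ℝ} (hs : IsOneSidedLipschitz k (s u)) :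
    IsOneSidedLipschitz (f u + (1 / 2) * g u ^ 2 * k) (probabilityFlowField f g s u) :=
  (isOneSidedLipschitz_smul_id (f u)).add (hs.const_smul (by positivity))

theorem stmt14_general {T : ℝ} (hf : ContinuousOn f (Icc 0 T)) (hg : ContinuousOn g (Icc 0 T))
    (hK : ContinuousOn K (Icc 0 T)) (hs : ∀ u ∈ Icc 0 T, IsOneSidedLipschitz (-K u) (s u))
    {x y : ℝ → E}
    (hx : IsIntegralCurveOn x (fun t ↦ probabilityFlowField f g s (T - t)) (Icc 0 T))
    (hy : IsIntegralCurveOn y (fun t ↦ probabilityFlowField f g s (T - t)) (Icc 0 T)) :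
    ∀ t ∈ Icc 0 T, ‖x t - y t‖ ^ 2 ≤
      Real.exp (∫ u in (0 : ℝ)..t, (2 * f (T - u) - g (T - u) ^ 2 * K (T - u))) *
        ‖x 0 - y 0‖ ^ 2 := by
  intro t ht
  let L : ℝ → ℝ := fun u ↦ f u + (1 / 2) * g u ^ 2 * -K u
  have hL : ContinuousOn L (Icc 0 T) := by fun_prop
  have hreverse : MapsTo (fun r ↦ T - r) (Icc 0 T) (Icc 0 T) := fun r hr ↦
    ⟨sub_nonneg.2 hr.2, sub_le_self T hr.1⟩
  have hrate : ∀ u, 2 * f (T - u) - g (T - u) ^ 2 * K (T - u) = 2 * L (T - u) := fun u ↦ by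
    simp only [L]; ring
  simp only [hrate]
  exact norm_sub_sq_le_exp_integral_of_isOneSidedLipschitz
    (hL.comp (continuousOn_const.sub continuousOn_id) hreverse)
    (fun r hr ↦ (hs (T - r) (hreverse (Ico_subset_Icc_self hr))).probabilityFlowField) hx hy ht

end ProbabilityFlow

theorem stmt14 {d : ℕ} (hd : 1 ≤ d) (T : ℝ) (hT : 0 < T)
    (f g K : ℝ → ℝ)
    (hf_cont : ContinuousOn f (Set.Icc 0 T)) (hg_cont : ContinuousOn g (Set.Icc 0 T))
    (hf_nonneg : ∀ u ∈ Set.Icc (0:ℝ) T, 0 ≤ f u)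
    (hK_cont : ContinuousOn K (Set.Icc 0 T))
    (s : ℝ → EuclideanSpace ℝ (Fin d) → EuclideanSpace ℝ (Fin d))
    (hs : ∀ u ∈ Set.Icc (0:ℝ) T, ∀ a b : EuclideanSpace ℝ (Fin d),
      ⟪s u a - s u b, a - b⟫ ≤ -K u * ‖a - b‖ ^ 2)
    (x y : ℝ → EuclideanSpace ℝ (Fin d))
    (hx : ∀ t ∈ Set.Icc (0:ℝ) T,
      HasDerivAt x (f (T - t) • x t + ((1/2) * g (T - t) ^ 2) • s (T - t) (x t)) t)
    (hy : ∀ t ∈ Set.Icc (0:ℝ) T,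
      HasDerivAt y (f (T - t) • y t + ((1/2) * g (T - t) ^ 2) • s (T - t) (y t)) t) :
    ∀ t ∈ Set.Icc (0:ℝ) T,
      ‖x t - y t‖ ^ 2 ≤
        Real.exp (∫ u in (0:ℝ)..t, (2 * f (T - u) - g (T - u) ^ 2 * K (T - u))) *
          ‖x 0 - y 0‖ ^ 2 :=
  stmt14_general hf_cont hg_cont hK_cont hs
    (fun t ht ↦ (hx t ht).hasDerivWithinAt) fun t ht ↦ (hy t ht).hasDerivWithinAt
end
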